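/- arXiv:2007.16033 — 3 statements merged into one kernel-verified Lean document; each statement's English description precedes it below -/
import Mathlib

section
/- Let L be an even positive definite lattice of rank l, let G be a subgroup of O(L), and let φ_j be a G-invariant weak Jacobi form of weight k_j and index m_j associated to L for 1 ≤ j ≤ l+1. Then the Jacobian J(φ_1,…,φ_{l+1}) is a weak Jacobi form of weight l + Σ_{j=1}^{l+1} k_j and index Σ_{j=1}^{l+1} m_j associated to L, and it satisfies J(τ, σ(z)) = det(σ) · J(τ, z) for every σ ∈ G. -/
open Complex Matrix

noncomputable section

/-- The ℂ-bilinear pairing on `ℂ^l` induced by an integral Gram matrix `M`. -/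
def pairC {l : ℕ} (M : Matrix (Fin l) (Fin l) ℤ) (v w : Fin l → ℂ) : ℂ :=
  ∑ i, ∑ j, v i * (M i j : ℂ) * w j

/-- The ℚ-bilinear pairing on `ℚ^l` induced by an integral Gram matrix `M`. -/
def pairQ {l : ℕ} (M : Matrix (Fin l) (Fin l) ℤ) (v w : Fin l → ℚ) : ℚ :=
  ∑ i, ∑ j, v i * (M i j : ℚ) * w j

def zc {l : ℕ} (x : Fin l → ℤ) : Fin l → ℂ := fun i => (x i : ℂ)
def qc {l : ℕ} (x : Fin l → ℚ) : Fin l → ℂ := fun i => (x i : ℂ)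

/-- `M` is the Gram matrix of an even positive definite lattice. -/
structure IsEvenPosDef {l : ℕ} (M : Matrix (Fin l) (Fin l) ℤ) : Prop where
  symm : M.IsSymm
  even_diag : ∀ i, Even (M i i)
  posDef : (M.map (Int.cast : ℤ → ℝ)).PosDef

/-- `G` is a subgroup of the integral orthogonal group `O(L)` of the lattice with
Gram matrix `M`. -/
structure IsOrthSubgroup {l : ℕ} (M : Matrix (Fin l) (Fin l) ℤ)
    (G : Set (Matrix (Fin l) (Fin l) ℤ)) : Prop where
  one_mem : 1 ∈ G
  mul_mem : ∀ σ₁ ∈ G, ∀ σ₂ ∈ G, σ₁ * σ₂ ∈ G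
  inv_mem : ∀ σ ∈ G, ∃ σ' ∈ G, σ * σ' = 1 ∧ σ' * σ = 1
  isometry : ∀ σ ∈ G, σᵀ * M * σ = M

/-- `ℓ ∈ L^*`, the dual lattice. -/
def InDual {l : ℕ} (M : Matrix (Fin l) (Fin l) ℤ) (ℓ : Fin l → ℚ) : Prop :=
  ∀ x : Fin l → ℤ, ∃ n : ℤ, pairQ M ℓ (fun i => (x i : ℚ)) = n

/-- `c` is a family of Fourier coefficients, supported on `n ≥ 0` and `ℓ ∈ L^*`,
whose associated Fourier series converges to `φ` on `ℍ × (L ⊗ ℂ)`. -/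
def FourierRep {l : ℕ} (M : Matrix (Fin l) (Fin l) ℤ) (φ : ℂ → (Fin l → ℂ) → ℂ)
    (c : ℕ → (Fin l → ℚ) → ℂ) : Prop :=
  (∀ n ℓ, c n ℓ ≠ 0 → InDual M ℓ) ∧
  ∀ τ : ℂ, 0 < τ.im → ∀ z : Fin l → ℂ,
    HasSum (fun p : ℕ × (Fin l → ℚ) =>
      c p.1 p.2 * Complex.exp (2 * (Real.pi : ℂ) * Complex.I *
        ((p.1 : ℂ) * τ + pairC M (qc p.2) z))) (φ τ z)

/-- `φ` is a weak Jacobi form of weight `k` and index `t` associated to the even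
positive definite lattice with Gram matrix `M`. -/
def IsWeakJacobiForm {l : ℕ} (M : Matrix (Fin l) (Fin l) ℤ) (k : ℤ) (t : ℕ)
    (φ : ℂ → (Fin l → ℂ) → ℂ) : Prop :=
  (DifferentiableOn ℂ (fun p : ℂ × (Fin l → ℂ) => φ p.1 p.2)
    ({τ : ℂ | 0 < τ.im} ×ˢ (Set.univ : Set (Fin l → ℂ)))) ∧
  (∀ a b c d : ℤ, a * d - b * c = 1 → ∀ τ : ℂ, 0 < τ.im → ∀ z : Fin l → ℂ,
    φ (((a : ℂ) * τ + (b : ℂ)) / ((c : ℂ) * τ + (d : ℂ)))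
        (fun i => z i / ((c : ℂ) * τ + (d : ℂ))) =
      ((c : ℂ) * τ + (d : ℂ)) ^ k *
        Complex.exp ((t : ℂ) * (Real.pi : ℂ) * Complex.I * (c : ℂ) *
          pairC M z z / ((c : ℂ) * τ + (d : ℂ))) * φ τ z) ∧
  (∀ x y : Fin l → ℤ, ∀ τ : ℂ, 0 < τ.im → ∀ z : Fin l → ℂ,
    φ τ (fun i => z i + (x i : ℂ) * τ + (y i : ℂ)) =
      Complex.exp (-(t : ℂ) * (Real.pi : ℂ) * Complex.I *
        (pairC M (zc x) (zc x) * τ + 2 * pairC M (zc x) z)) * φ τ z) ∧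
  (∃ c : ℕ → (Fin l → ℚ) → ℂ, FourierRep M φ c)

/-- `φ` is invariant under the action of `G` on the lattice variable. -/
def GInvariant {l : ℕ} (G : Set (Matrix (Fin l) (Fin l) ℤ))
    (φ : ℂ → (Fin l → ℂ) → ℂ) : Prop :=
  ∀ σ ∈ G, ∀ τ : ℂ, 0 < τ.im → ∀ z : Fin l → ℂ,
    φ τ ((σ.map (Int.cast : ℤ → ℂ)).mulVec z) = φ τ z

/-- The partial derivative of `φ(τ, 𝔷)` in the `i`-th coordinate of the lattice
variable `𝔷`. -/
def pderiv' {l : ℕ} (i : Fin l) (φ : ℂ → (Fin l → ℂ) → ℂ) (τ : ℂ) (z : Fin l → ℂ) : ℂ :=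
  deriv (fun w : ℂ => φ τ (Function.update z i w)) (z i)

/-- The Jacobian `J(φ_1, ..., φ_{l+1})` of `l+1` Jacobi forms of indices `m j`:
the determinant of the matrix whose first row is `(m_j φ_j)_j` and whose later
rows are the partial derivatives `∂φ_j/∂z_i`. -/
def jacJacobian {l : ℕ} (m : Fin (l + 1) → ℕ) (φ : Fin (l + 1) → ℂ → (Fin l → ℂ) → ℂ)
    (τ : ℂ) (z : Fin l → ℂ) : ℂ :=
  Matrix.det (Matrix.of fun i j : Fin (l + 1) =>
    Fin.cases ((m j : ℂ) * φ j τ z) (fun i' : Fin l => pderiv' i' (φ j) τ z) i)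

/-- `f` is a (holomorphic) modular form of weight `k` on `SL₂(ℤ)`, viewed as a
holomorphic function on the upper half-plane with a Fourier expansion supported
on `n ≥ 0`. -/
def IsModularForm (k : ℤ) (f : ℂ → ℂ) : Prop :=
  DifferentiableOn ℂ f {τ : ℂ | 0 < τ.im} ∧
  (∀ a b c d : ℤ, a * d - b * c = 1 → ∀ τ : ℂ, 0 < τ.im →
    f (((a : ℂ) * τ + (b : ℂ)) / ((c : ℂ) * τ + (d : ℂ))) =
      ((c : ℂ) * τ + (d : ℂ)) ^ k * f τ) ∧
  ∃ cf : ℕ → ℂ, ∀ τ : ℂ, 0 < τ.im →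
    HasSum (fun n : ℕ => cf n * Complex.exp (2 * (Real.pi : ℂ) * Complex.I * (n : ℂ) * τ))
      (f τ)

/-- `φ` is not identically zero on `ℍ × (L ⊗ ℂ)`. -/
def NotIdenticallyZero {l : ℕ} (φ : ℂ → (Fin l → ℂ) → ℂ) : Prop :=
  ∃ τ z, 0 < τ.im ∧ φ τ z ≠ 0

/-- `r` is a primitive lattice vector. -/
def PrimitiveVec {l : ℕ} (r : Fin l → ℤ) : Prop :=
  r ≠ 0 ∧ ∀ (n : ℤ) (s : Fin l → ℤ), r = n • s → IsUnit n

/-- The reflection `σ_r : v ↦ v - ⟨r^∨, v⟩ r` belongs to `G`. -/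
def ReflectionIn {l : ℕ} (M : Matrix (Fin l) (Fin l) ℤ)
    (G : Set (Matrix (Fin l) (Fin l) ℤ)) (r : Fin l → ℤ) : Prop :=
  ∃ S ∈ G, ∀ v : Fin l → ℂ,
    (S.map (Int.cast : ℤ → ℂ)).mulVec v =
      fun i => v i - 2 * pairC M (zc r) v / pairC M (zc r) (zc r) * (r i : ℂ)

/-- `(τ, z)` belongs to `D_r(τ)`, i.e. `⟨r^∨, z⟩ ∈ ℤτ ⊕ ℤ`. -/
def OnMirror {l : ℕ} (M : Matrix (Fin l) (Fin l) ℤ) (r : Fin l → ℤ) (τ : ℂ)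
    (z : Fin l → ℂ) : Prop :=
  ∃ a b : ℤ, 2 * pairC M (zc r) z / pairC M (zc r) (zc r) = (a : ℂ) * τ + (b : ℂ)

/-- `J` vanishes precisely, and with multiplicity one, on the sets `D_r(τ)` for
primitive `r ∈ L` whose reflection lies in `G`. -/
def VanishesOrderOneOnMirrors {l : ℕ} (M : Matrix (Fin l) (Fin l) ℤ)
    (G : Set (Matrix (Fin l) (Fin l) ℤ)) (J : ℂ → (Fin l → ℂ) → ℂ) : Prop :=
  ∀ τ : ℂ, 0 < τ.im → ∀ z : Fin l → ℂ,
    ((J τ z = 0) ↔ ∃ r, PrimitiveVec r ∧ ReflectionIn M G r ∧ OnMirror M r τ z) ∧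
    (∀ r, PrimitiveVec r → ReflectionIn M G r → OnMirror M r τ z →
      (∀ r', PrimitiveVec r' → ReflectionIn M G r' → OnMirror M r' τ z →
        r' = r ∨ r' = -r) →
      deriv (fun w : ℂ => J τ (fun i => z i + w * (r i : ℂ))) 0 ≠ 0)

/-- The Fourier expansion of `φ` has a non-zero coefficient of type `f(0, ℓ)`. -/
def HasNonzeroQZeroTerm {l : ℕ} (M : Matrix (Fin l) (Fin l) ℤ)
    (φ : ℂ → (Fin l → ℂ) → ℂ) : Prop :=
  ∃ c : ℕ → (Fin l → ℚ) → ℂ, FourierRep M φ c ∧ ∃ ℓ, c 0 ℓ ≠ 0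

/-- `ψ = P(φ_1, ..., φ_n)` where `P` is a polynomial with coefficients which are
modular forms on `SL₂(ℤ)`, graded so that each monomial has weight `k` and index `t`. -/
def MPolyRep {l n : ℕ} (kj : Fin n → ℤ) (mj : Fin n → ℕ)
    (φ : Fin n → ℂ → (Fin l → ℂ) → ℂ) (k : ℤ) (t : ℕ)
    (c : (Fin n → ℕ) → ℂ → ℂ) (ψ : ℂ → (Fin l → ℂ) → ℂ) : Prop :=
  {d : Fin n → ℕ | c d ≠ 0}.Finite ∧
  (∀ d : Fin n → ℕ, c d ≠ 0 →
    (∑ j, d j * mj j) = t ∧ IsModularForm (k - ∑ j, (d j : ℤ) * kj j) (c d)) ∧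
  (∀ τ : ℂ, 0 < τ.im → ∀ z : Fin l → ℂ,
    ψ τ z = ∑ᶠ d : Fin n → ℕ, c d τ * ∏ j, (φ j τ z) ^ (d j))

/-- The forms `φ_1, ..., φ_n` are algebraically independent over the graded ring
`M_*(SL₂(ℤ))` of modular forms on `SL₂(ℤ)`. -/
def AlgIndepOverM {l n : ℕ} (φ : Fin n → ℂ → (Fin l → ℂ) → ℂ) : Prop :=
  ∀ c : (Fin n → ℕ) → ℂ → ℂ,
    {d : Fin n → ℕ | c d ≠ 0}.Finite →
    (∀ d, c d ≠ 0 → ∃ w : ℤ, IsModularForm w (c d)) →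
    (∀ τ : ℂ, 0 < τ.im → ∀ z : Fin l → ℂ,
      (∑ᶠ d : Fin n → ℕ, c d τ * ∏ j, (φ j τ z) ^ (d j)) = 0) →
    ∀ d τ, 0 < τ.im → c d τ = 0


/-! ### Fourier series -/

/-- Coordinates of the linear form `⟨ℓ, ·⟩`. -/
def bco {l : ℕ} (M : Matrix (Fin l) (Fin l) ℤ) (v : Fin l → ℚ) (k : Fin l) : ℝ :=
  ∑ i, (v i : ℝ) * (M i k : ℝ)

lemma pairC_qc {l : ℕ} (M : Matrix (Fin l) (Fin l) ℤ) (v : Fin l → ℚ) (z : Fin l → ℂ) :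
    pairC M (qc v) z = ∑ k, (bco M v k : ℂ) * z k := by
  unfold pairC qc bco
  rw [Finset.sum_comm]
  refine Finset.sum_congr rfl fun k _ => ?_
  rw [← Finset.sum_mul]
  push_cast
  rfl

/-- The linear form in the exponent of a Fourier term. -/
def lam {l : ℕ} (M : Matrix (Fin l) (Fin l) ℤ) (p : ℕ × (Fin l → ℚ)) :
    (ℂ × (Fin l → ℂ)) →L[ℂ] ℂ :=
  (2 * (Real.pi : ℂ) * Complex.I) • ((p.1 : ℂ) • ContinuousLinearMap.fst ℂ ℂ (Fin l → ℂ) +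
    ∑ k, (bco M p.2 k : ℂ) •
      ((ContinuousLinearMap.proj k : (Fin l → ℂ) →L[ℂ] ℂ).comp
        (ContinuousLinearMap.snd ℂ ℂ (Fin l → ℂ))))

lemma lam_apply {l : ℕ} (M : Matrix (Fin l) (Fin l) ℤ) (p : ℕ × (Fin l → ℚ))
    (x : ℂ × (Fin l → ℂ)) :
    lam M p x = 2 * (Real.pi : ℂ) * Complex.I * ((p.1 : ℂ) * x.1 + pairC M (qc p.2) x.2) := by
  rw [pairC_qc]
  simp [lam]
  ring

lemma lam_re {l : ℕ} (M : Matrix (Fin l) (Fin l) ℤ) (p : ℕ × (Fin l → ℚ))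
    (x : ℂ × (Fin l → ℂ)) :
    (lam M p x).re = -(2 * Real.pi) * ((p.1 : ℝ) * x.1.im + ∑ k, bco M p.2 k * (x.2 k).im) := by
  rw [lam_apply, pairC_qc]
  have h : (2 * (Real.pi : ℂ) * Complex.I * ((p.1 : ℂ) * x.1 + ∑ k, (bco M p.2 k : ℂ) * x.2 k))
      = ((2 * Real.pi : ℝ) : ℂ) * (Complex.I *
        ((p.1 : ℂ) * x.1 + ∑ k, (bco M p.2 k : ℂ) * x.2 k)) := by
    push_cast; ring
  rw [h, Complex.re_ofReal_mul, Complex.I_mul_re, Complex.add_im, Complex.im_sum]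
  have h2 : ((p.1 : ℂ) * x.1).im = (p.1 : ℝ) * x.1.im := by
    rw [← Complex.ofReal_natCast, Complex.im_ofReal_mul]
  rw [h2]
  simp only [Complex.im_ofReal_mul]
  ring

/-- Bound for the norm of `lam`. -/
def lamN {l : ℕ} (M : Matrix (Fin l) (Fin l) ℤ) (p : ℕ × (Fin l → ℚ)) : ℝ :=
  2 * Real.pi * ((p.1 : ℝ) + ∑ k, |bco M p.2 k|)

lemma lamN_nonneg {l : ℕ} (M : Matrix (Fin l) (Fin l) ℤ) (p : ℕ × (Fin l → ℚ)) :
    0 ≤ lamN M p := by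
  unfold lamN
  have : 0 ≤ ∑ k, |bco M p.2 k| := Finset.sum_nonneg fun _ _ => abs_nonneg _
  positivity

lemma lam_norm_le {l : ℕ} (M : Matrix (Fin l) (Fin l) ℤ) (p : ℕ × (Fin l → ℚ)) :
    ‖lam M p‖ ≤ lamN M p := by
  refine ContinuousLinearMap.opNorm_le_bound _ (lamN_nonneg M p) fun x => ?_
  rw [lam_apply, pairC_qc, norm_mul]
  have h1 : ‖(2 * (Real.pi : ℂ) * Complex.I)‖ = 2 * Real.pi := by
    simp [abs_of_pos Real.pi_pos]
  rw [h1, lamN, mul_assoc (2 * Real.pi)]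
  refine mul_le_mul_of_nonneg_left ?_ (by positivity)
  refine (norm_add_le _ _).trans ?_
  rw [add_mul, Finset.sum_mul]
  refine add_le_add ?_ ((norm_sum_le _ _).trans (Finset.sum_le_sum fun k _ => ?_))
  · rw [norm_mul, Complex.norm_natCast]
    exact mul_le_mul_of_nonneg_left (norm_fst_le x) (by positivity)
  · rw [norm_mul, Complex.norm_real, Real.norm_eq_abs]
    exact mul_le_mul_of_nonneg_left ((norm_le_pi_norm x.2 k).trans (norm_snd_le x)) (abs_nonneg _)

/-- Corner points around a base point. -/
def corner {l : ℕ} (x : ℂ × (Fin l → ℂ)) (δ : ℝ) (s : Fin l → SignType) : ℂ × (Fin l → ℂ) :=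
  (x.1 - ((2 * δ : ℝ) : ℂ) * Complex.I,
    fun k => x.2 k - ((2 * δ * ((s k : SignType) : ℝ) : ℝ) : ℂ) * Complex.I)

lemma term_bound {l : ℕ} (M : Matrix (Fin l) (Fin l) ℤ) (p : ℕ × (Fin l → ℚ))
    (x₀ x : ℂ × (Fin l → ℂ)) {δ : ℝ} (hδ : 0 < δ) (hx : x ∈ Metric.ball x₀ δ) :
    lamN M p * Real.exp (lam M p x).re ≤
      δ⁻¹ * ∑ s : Fin l → SignType, Real.exp (lam M p (corner x₀ δ s)).re := by
  set s₀ : Fin l → SignType := fun k => SignType.sign (bco M p.2 k) with hs₀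
  have hsum : Real.exp (lam M p (corner x₀ δ s₀)).re ≤
      ∑ s : Fin l → SignType, Real.exp (lam M p (corner x₀ δ s)).re :=
    Finset.single_le_sum (f := fun s => Real.exp (lam M p (corner x₀ δ s)).re)
      (fun _ _ => (Real.exp_pos _).le) (Finset.mem_univ s₀)
  refine le_trans ?_ (mul_le_mul_of_nonneg_left hsum (by positivity))
  have hc : (lam M p (corner x₀ δ s₀)).re = (lam M p x₀).re + 2 * δ * lamN M p := by
    rw [lam_re, lam_re, lamN]
    have : ∑ k, bco M p.2 k * ((corner x₀ δ s₀).2 k).im =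
        ∑ k, bco M p.2 k * (x₀.2 k).im - 2 * δ * ∑ k, |bco M p.2 k| := by
      rw [Finset.mul_sum, ← Finset.sum_sub_distrib]
      refine Finset.sum_congr rfl fun k _ => ?_
      have : ((corner x₀ δ s₀).2 k).im = (x₀.2 k).im - 2 * δ * ((s₀ k : SignType) : ℝ) := by
        simp only [corner, Complex.sub_im, Complex.im_ofReal_mul, Complex.I_im, mul_one]
      rw [this, ← self_mul_sign (bco M p.2 k)]
      ring
    rw [this]
    have : (corner x₀ δ s₀).1.im = x₀.1.im - 2 * δ := by
      simp only [corner, Complex.sub_im, Complex.im_ofReal_mul, Complex.I_im, mul_one]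
    rw [this]
    ring
  have hle : (lam M p x).re ≤ (lam M p x₀).re + δ * lamN M p := by
    have h1 : (lam M p x).re - (lam M p x₀).re = (lam M p (x - x₀)).re := by
      rw [map_sub, Complex.sub_re]
    have h2 : (lam M p (x - x₀)).re ≤ lamN M p * δ := by
      refine (Complex.re_le_norm _).trans (((lam M p).le_opNorm _).trans ?_)
      refine mul_le_mul (lam_norm_le M p) ?_ (norm_nonneg _) (lamN_nonneg M p)
      rw [← dist_eq_norm]
      exact (Metric.mem_ball.1 hx).le
    linarith
  rw [hc]
  have h3 : lamN M p ≤ δ⁻¹ * Real.exp (δ * lamN M p) := by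
    rw [← div_eq_inv_mul, le_div_iff₀ hδ]
    have := Real.add_one_le_exp (δ * lamN M p)
    linarith
  calc lamN M p * Real.exp (lam M p x).re
      ≤ (δ⁻¹ * Real.exp (δ * lamN M p)) * Real.exp ((lam M p x₀).re + δ * lamN M p) := by
        gcongr
    _ = δ⁻¹ * Real.exp ((lam M p x₀).re + 2 * δ * lamN M p) := by
        rw [mul_assoc, ← Real.exp_add]; congr 2; ring

/-- A Fourier term as a function of both variables. -/
def fterm {l : ℕ} (M : Matrix (Fin l) (Fin l) ℤ) (c : ℕ → (Fin l → ℚ) → ℂ)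
    (p : ℕ × (Fin l → ℚ)) (x : ℂ × (Fin l → ℂ)) : ℂ :=
  c p.1 p.2 * Complex.exp (lam M p x)

lemma FourierRep.hasSum_fterm {l : ℕ} {M : Matrix (Fin l) (Fin l) ℤ} {f : ℂ → (Fin l → ℂ) → ℂ}
    {c : ℕ → (Fin l → ℚ) → ℂ} (h : FourierRep M f c) (x : ℂ × (Fin l → ℂ)) (hx : 0 < x.1.im) :
    HasSum (fun p => fterm M c p x) (f x.1 x.2) := by
  have := h.2 x.1 hx x.2
  simpa only [fterm, lam_apply] using this

lemma FourierRep.hasFDerivAt {l : ℕ} {M : Matrix (Fin l) (Fin l) ℤ} {f : ℂ → (Fin l → ℂ) → ℂ}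
    {c : ℕ → (Fin l → ℚ) → ℂ} (h : FourierRep M f c) (x₀ : ℂ × (Fin l → ℂ)) (hx₀ : 0 < x₀.1.im) :
    ∃ D : (ℂ × (Fin l → ℂ)) →L[ℂ] ℂ,
      HasFDerivAt (fun x : ℂ × (Fin l → ℂ) => f x.1 x.2) D x₀ ∧
      HasSum (fun p => fterm M c p x₀ • lam M p) D := by
  set δ : ℝ := x₀.1.im / 4 with hδd
  have hδ : 0 < δ := by positivity
  set u : ℕ × (Fin l → ℚ) → ℝ := fun p =>
    δ⁻¹ * ∑ s : Fin l → SignType, ‖fterm M c p (corner x₀ δ s)‖ with hu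
  have hus : Summable u := by
    refine Summable.mul_left _ (summable_sum fun s _ => ?_)
    refine (h.hasSum_fterm _ ?_).summable.norm
    have : (corner x₀ δ s).1.im = x₀.1.im - 2 * δ := by
      simp only [corner, Complex.sub_im, Complex.im_ofReal_mul, Complex.I_im, mul_one]
    rw [this]; linarith
  have hbd : ∀ p, ∀ x ∈ Metric.ball x₀ δ, ‖fterm M c p x • lam M p‖ ≤ u p := by
    intro p x hx
    rw [norm_smul, fterm, norm_mul, Complex.norm_exp]
    have e : u p = ‖c p.1 p.2‖ *
        (δ⁻¹ * ∑ s : Fin l → SignType, Real.exp (lam M p (corner x₀ δ s)).re) := by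
      simp only [hu, fterm, norm_mul, Complex.norm_exp]
      rw [← Finset.mul_sum]; ring
    rw [e, mul_assoc]
    refine mul_le_mul_of_nonneg_left ?_ (norm_nonneg _)
    refine le_trans ?_ (term_bound M p x₀ x hδ hx)
    rw [mul_comm]
    exact mul_le_mul_of_nonneg_right (lam_norm_le M p) (Real.exp_pos _).le
  have hmem : x₀ ∈ Metric.ball x₀ δ := Metric.mem_ball_self hδ
  have key := hasFDerivAt_tsum_of_isPreconnected (𝕜 := ℂ) (f := fun p x => fterm M c p x)
    (f' := fun p x => fterm M c p x • lam M p) (s := Metric.ball x₀ δ) (x₀ := x₀) (x := x₀)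
    hus Metric.isOpen_ball ((convex_ball x₀ δ).isPreconnected) ?_ hbd hmem
    (h.hasSum_fterm _ hx₀).summable hmem
  · refine ⟨_, key.congr_of_eventuallyEq ?_,
      (Summable.of_norm_bounded hus fun p => hbd p x₀ hmem).hasSum⟩
    filter_upwards [(isOpen_lt continuous_const
      (Complex.continuous_im.comp continuous_fst)).mem_nhds hx₀] with x hx
    exact (h.hasSum_fterm x hx).tsum_eq.symm
  · intro p x _
    have := ((lam M p).hasFDerivAt (x := x)).cexp.const_mul (c p.1 p.2)
    rw [smul_smul] at this
    exact this

lemma pderiv_eq {l : ℕ} {f : ℂ → (Fin l → ℂ) → ℂ} {τ : ℂ} {z : Fin l → ℂ}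
    {D : (ℂ × (Fin l → ℂ)) →L[ℂ] ℂ}
    (h : HasFDerivAt (fun x : ℂ × (Fin l → ℂ) => f x.1 x.2) D (τ, z)) (i : Fin l) :
    pderiv' i f τ z = D (0, Pi.single i 1) := by
  unfold pderiv'
  have h1 : HasDerivAt (fun w : ℂ => ((τ, Function.update z i w) : ℂ × (Fin l → ℂ)))
      (0, Pi.single i 1) (z i) :=
    (hasDerivAt_const _ _).prodMk (hasDerivAt_update z i (z i))
  have h2 : HasFDerivAt (fun x : ℂ × (Fin l → ℂ) => f x.1 x.2) D
      ((fun w : ℂ => ((τ, Function.update z i w) : ℂ × (Fin l → ℂ))) (z i)) := by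
    simpa using h
  exact (h2.comp_hasDerivAt (z i) h1).deriv

/-- `f` has a Fourier expansion. -/
def HasFR {l : ℕ} (M : Matrix (Fin l) (Fin l) ℤ) (f : ℂ → (Fin l → ℂ) → ℂ) : Prop :=
  ∃ c : ℕ → (Fin l → ℚ) → ℂ, FourierRep M f c

lemma HasFR.differentiableOn {l : ℕ} {M : Matrix (Fin l) (Fin l) ℤ} {f : ℂ → (Fin l → ℂ) → ℂ}
    (h : HasFR M f) : DifferentiableOn ℂ (fun p : ℂ × (Fin l → ℂ) => f p.1 p.2)
    ({τ : ℂ | 0 < τ.im} ×ˢ (Set.univ : Set (Fin l → ℂ))) := by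
  obtain ⟨c, hc⟩ := h
  intro x hx
  obtain ⟨D, hD, -⟩ := hc.hasFDerivAt x hx.1
  exact hD.differentiableAt.differentiableWithinAt

lemma HasFR.pderiv {l : ℕ} {M : Matrix (Fin l) (Fin l) ℤ} {f : ℂ → (Fin l → ℂ) → ℂ}
    (h : HasFR M f) (i : Fin l) : HasFR M (pderiv' i f) := by
  obtain ⟨c, hc⟩ := h
  refine ⟨fun n v => c n v * lam M (n, v) (0, Pi.single i 1),
    fun n v hn => hc.1 n v (left_ne_zero_of_mul hn), fun τ hτ z => ?_⟩
  obtain ⟨D, hD, hs⟩ := hc.hasFDerivAt (τ, z) hτ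
  rw [pderiv_eq hD i]
  have := hs.mapL (ContinuousLinearMap.apply ℂ ℂ ((0, Pi.single i 1) : ℂ × (Fin l → ℂ)))
  simp only [ContinuousLinearMap.apply_apply, _root_.smul_apply, smul_eq_mul,
    fterm] at this
  refine this.congr_fun ?_
  intro p
  rw [lam_apply M p (τ, z)]
  ring

lemma HasFR.const_mul {l : ℕ} {M : Matrix (Fin l) (Fin l) ℤ} {f : ℂ → (Fin l → ℂ) → ℂ}
    (h : HasFR M f) (a : ℂ) : HasFR M (fun τ z => a * f τ z) := by
  obtain ⟨c, hc⟩ := h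
  refine ⟨fun n v => a * c n v, fun n v hn => hc.1 n v (right_ne_zero_of_mul hn),
    fun τ hτ z => ?_⟩
  simpa only [mul_assoc] using (hc.2 τ hτ z).mul_left a

lemma HasFR.add {l : ℕ} {M : Matrix (Fin l) (Fin l) ℤ} {f g : ℂ → (Fin l → ℂ) → ℂ}
    (hf : HasFR M f) (hg : HasFR M g) : HasFR M (fun τ z => f τ z + g τ z) := by
  obtain ⟨c, hc⟩ := hf
  obtain ⟨d, hd⟩ := hg
  refine ⟨fun n v => c n v + d n v, fun n v hn => ?_, fun τ hτ z => ?_⟩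
  · by_cases h0 : c n v = 0
    · refine hd.1 n v fun h1 => hn ?_
      simp [h0, h1]
    · exact hc.1 n v h0
  · simpa only [add_mul] using (hc.2 τ hτ z).add (hd.2 τ hτ z)

lemma HasFR.zero {l : ℕ} (M : Matrix (Fin l) (Fin l) ℤ) : HasFR M (fun _ _ => (0 : ℂ)) := by
  refine ⟨fun _ _ => 0, fun n v hn => (hn rfl).elim, fun τ hτ z => ?_⟩
  simpa using hasSum_zero

lemma HasFR.one {l : ℕ} (M : Matrix (Fin l) (Fin l) ℤ) : HasFR M (fun _ _ => (1 : ℂ)) := by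
  classical
  refine ⟨fun n v => if (n, v) = ((0, 0) : ℕ × (Fin l → ℚ)) then 1 else 0,
    fun n v hn => ?_, fun τ hτ z => ?_⟩
  · have : (n, v) = ((0, 0) : ℕ × (Fin l → ℚ)) := by
      by_contra h; exact hn (if_neg h)
    have hv : v = 0 := congrArg Prod.snd this
    intro x
    exact ⟨0, by simp [hv, pairQ]⟩
  · refine (hasSum_ite_eq ((0, 0) : ℕ × (Fin l → ℚ)) (1 : ℂ)).congr_fun ?_
    intro p
    by_cases hp : p = (0, 0)
    · subst hp
      simp [pairC, qc]
    · simp [hp]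

lemma InDual.add {l : ℕ} {M : Matrix (Fin l) (Fin l) ℤ} {v w : Fin l → ℚ}
    (hv : InDual M v) (hw : InDual M w) : InDual M (v + w) := by
  intro x
  obtain ⟨a, ha⟩ := hv x
  obtain ⟨b, hb⟩ := hw x
  refine ⟨a + b, ?_⟩
  push_cast
  rw [← ha, ← hb]
  simp only [pairQ, Pi.add_apply, add_mul, Finset.sum_add_distrib]

lemma lam_add {l : ℕ} (M : Matrix (Fin l) (Fin l) ℤ) (p q : ℕ × (Fin l → ℚ))
    (x : ℂ × (Fin l → ℂ)) : lam M (p + q) x = lam M p x + lam M q x := by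
  simp only [lam_apply, pairC, qc, Prod.fst_add, Prod.snd_add, Pi.add_apply]
  push_cast
  simp only [add_mul, Finset.sum_add_distrib, mul_add]
  ring

lemma hasSum_mul_complex {ι κ : Type*} {f : ι → ℂ} {g : κ → ℂ} {s t : ℂ}
    (hf : HasSum f s) (hg : HasSum g t) :
    HasSum (fun x : ι × κ => f x.1 * g x.2) (s * t) := by
  have h : Summable (fun x : ι × κ => f x.1 * g x.2) :=
    summable_mul_of_summable_norm hf.summable.norm hg.summable.norm
  exact HasSum.mul hf hg h

lemma HasFR.mul {l : ℕ} {M : Matrix (Fin l) (Fin l) ℤ} {f g : ℂ → (Fin l → ℂ) → ℂ}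
    (hf : HasFR M f) (hg : HasFR M g) : HasFR M (fun τ z => f τ z * g τ z) := by
  obtain ⟨c, hc⟩ := hf
  obtain ⟨d, hd⟩ := hg
  let P := ℕ × (Fin l → ℚ)
  let ad : P × P → P := fun x => x.1 + x.2
  refine ⟨fun n v => ∑' x : {x : P × P // ad x = (n, v)},
    c x.1.1.1 x.1.1.2 * d x.1.2.1 x.1.2.2, fun n v hn => ?_, fun τ hτ z => ?_⟩
  · have : ∃ x : {x : P × P // ad x = (n, v)}, c x.1.1.1 x.1.1.2 * d x.1.2.1 x.1.2.2 ≠ 0 := by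
      by_contra! h
      exact hn (by simp [h])
    obtain ⟨⟨⟨⟨n1, v1⟩, ⟨n2, v2⟩⟩, hx⟩, h⟩ := this
    have hv : v1 + v2 = v := congrArg Prod.snd hx
    rw [← hv]
    exact (hc.1 n1 v1 (left_ne_zero_of_mul h)).add (hd.1 n2 v2 (right_ne_zero_of_mul h))
  · have h1 := hc.hasSum_fterm (τ, z) hτ
    have h2 := hd.hasSum_fterm (τ, z) hτ
    have h3 : HasSum (fun x : P × P => fterm M c x.1 (τ, z) * fterm M d x.2 (τ, z))
        (f τ z * g τ z) :=
      hasSum_mul_complex (f := fun p => fterm M c p (τ, z)) (g := fun p => fterm M d p (τ, z))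
        (s := f τ z) (t := g τ z) h1 h2
    have h4 : HasSum ((fun x : P × P => fterm M c x.1 (τ, z) * fterm M d x.2 (τ, z)) ∘
        (Equiv.sigmaFiberEquiv ad)) (f τ z * g τ z) := (Equiv.hasSum_iff _).2 h3
    refine HasSum.sigma (g := fun p : P => (∑' x : {x : P × P // ad x = (p.1, p.2)},
      c x.1.1.1 x.1.1.2 * d x.1.2.1 x.1.2.2) * Complex.exp (2 * (Real.pi : ℂ) * Complex.I *
        ((p.1 : ℂ) * τ + pairC M (qc p.2) z))) h4 fun p => ?_
    have h5 := (h4.summable.sigma_factor p).hasSum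
    have heq : (∑' x : {x : P × P // ad x = (p.1, p.2)},
        c x.1.1.1 x.1.1.2 * d x.1.2.1 x.1.2.2) * Complex.exp (2 * (Real.pi : ℂ) * Complex.I *
        ((p.1 : ℂ) * τ + pairC M (qc p.2) z)) = ∑' b : {x : P × P // ad x = p},
        ((fun x : P × P => fterm M c x.1 (τ, z) * fterm M d x.2 (τ, z)) ∘
          (Equiv.sigmaFiberEquiv ad)) ⟨p, b⟩ := ?_
    · beta_reduce
      rw [heq]
      exact h5
    rw [← tsum_mul_right]
    refine tsum_congr fun x => ?_
    obtain ⟨⟨x1, x2⟩, hx⟩ := x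
    have hx' : p = x1 + x2 := hx.symm
    change c x1.1 x1.2 * d x2.1 x2.2 * _ = fterm M c x1 (τ, z) * fterm M d x2 (τ, z)
    unfold fterm
    have : lam M p (τ, z) = 2 * (Real.pi : ℂ) * Complex.I *
        ((p.1 : ℂ) * τ + pairC M (qc p.2) z) := lam_apply _ _ _
    rw [← this, hx', lam_add, Complex.exp_add]
    ring

lemma HasFR.sum {l : ℕ} {M : Matrix (Fin l) (Fin l) ℤ} {ι : Type*} (s : Finset ι)
    {f : ι → ℂ → (Fin l → ℂ) → ℂ} (h : ∀ i, HasFR M (f i)) :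
    HasFR M (fun τ z => ∑ i ∈ s, f i τ z) := by
  classical
  induction s using Finset.induction_on with
  | empty => simpa using HasFR.zero M
  | insert a s ha ih =>
    simp only [Finset.sum_insert ha]
    exact (h a).add ih

lemma HasFR.prod {l : ℕ} {M : Matrix (Fin l) (Fin l) ℤ} {ι : Type*} (s : Finset ι)
    {f : ι → ℂ → (Fin l → ℂ) → ℂ} (h : ∀ i, HasFR M (f i)) :
    HasFR M (fun τ z => ∏ i ∈ s, f i τ z) := by
  classical
  induction s using Finset.induction_on with
  | empty => simpa using HasFR.one M
  | insert a s ha ih =>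
    simp only [Finset.prod_insert ha]
    exact (h a).mul ih

lemma HasFR.jac {l : ℕ} {M : Matrix (Fin l) (Fin l) ℤ} (m : Fin (l + 1) → ℕ)
    {φ : Fin (l + 1) → ℂ → (Fin l → ℂ) → ℂ} (h : ∀ j, HasFR M (φ j)) :
    HasFR M (jacJacobian m φ) := by
  have e : jacJacobian m φ = fun τ z => ∑ σ : Equiv.Perm (Fin (l + 1)),
      ((Equiv.Perm.sign σ : ℤ) : ℂ) * ∏ j, (Fin.cases (motive := fun _ => ℂ)
        ((m j : ℂ) * φ j τ z) (fun i' : Fin l => pderiv' i' (φ j) τ z) (σ j)) := by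
    funext τ z
    rw [jacJacobian, Matrix.det_apply']
    rfl
  rw [e]
  refine HasFR.sum _ fun σ => HasFR.const_mul (HasFR.prod _ fun j => ?_) _
  refine Fin.cases (motive := fun k => HasFR M (fun τ z => Fin.cases (motive := fun _ => ℂ)
    ((m j : ℂ) * φ j τ z) (fun i' : Fin l => pderiv' i' (φ j) τ z) k)) ?_ (fun i => ?_) (σ j)
  · exact (h j).const_mul _
  · exact (h j).pderiv i

/-! ### Transformation laws -/

lemma det_first_row {l : ℕ} (B : Matrix (Fin (l + 1)) (Fin (l + 1)) ℂ) (h0 : B 0 0 = 1)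
    (h1 : ∀ j : Fin l, B 0 j.succ = 0) : B.det = (B.submatrix Fin.succ Fin.succ).det := by
  rw [Matrix.det_succ_row_zero, Fin.sum_univ_succ]
  simp [h0, h1]

lemma pderiv_eq_fderiv {l : ℕ} {f : ℂ → (Fin l → ℂ) → ℂ} {τ : ℂ}
    (h : Differentiable ℂ (f τ)) (i : Fin l) (z : Fin l → ℂ) :
    pderiv' i f τ z = fderiv ℂ (f τ) z (Pi.single i 1) := by
  unfold pderiv'
  have h2 : HasFDerivAt (f τ) (fderiv ℂ (f τ) z) (Function.update z i (z i)) := by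
    simpa using (h z).hasFDerivAt
  exact (h2.comp_hasDerivAt (z i) (hasDerivAt_update z i (z i))).deriv

lemma jac_transform {l : ℕ} (m : Fin (l + 1) → ℕ) (φ : Fin (l + 1) → ℂ → (Fin l → ℂ) → ℂ)
    (τ τ' : ℂ) (A : Matrix (Fin l) (Fin l) ℂ) (b : Fin l → ℂ)
    (hd : ∀ j, Differentiable ℂ (φ j τ)) (hd' : ∀ j, Differentiable ℂ (φ j τ'))
    (g : (Fin l → ℂ) → ℂ) (hg : Differentiable ℂ g) (C : Fin (l + 1) → ℂ)
    (H : ∀ j z, φ j τ' (A.mulVec z + b) = C j * Complex.exp ((m j : ℂ) * g z) * φ j τ z)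
    (z : Fin l → ℂ) :
    A.det * jacJacobian m φ τ' (A.mulVec z + b) =
      (∏ j, C j) * Complex.exp (((∑ j, m j : ℕ) : ℂ) * g z) * jacJacobian m φ τ z := by
  set N' : Matrix (Fin (l + 1)) (Fin (l + 1)) ℂ := Matrix.of fun i j : Fin (l + 1) =>
    Fin.cases ((m j : ℂ) * φ j τ' (A.mulVec z + b))
      (fun i' : Fin l => pderiv' i' (φ j) τ' (A.mulVec z + b)) i with hN'
  set N : Matrix (Fin (l + 1)) (Fin (l + 1)) ℂ := Matrix.of fun i j : Fin (l + 1) =>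
    Fin.cases ((m j : ℂ) * φ j τ z) (fun i' : Fin l => pderiv' i' (φ j) τ z) i with hN
  let P1 : Matrix (Fin (l + 1)) (Fin (l + 1)) ℂ := Matrix.of fun i j =>
    Fin.cases (motive := fun _ => ℂ) (Fin.cases (motive := fun _ => ℂ) 1 (fun _ => 0) j)
      (fun i' => Fin.cases (motive := fun _ => ℂ) 0 (fun j' => A j' i') j) i
  let P2 : Matrix (Fin (l + 1)) (Fin (l + 1)) ℂ := Matrix.of fun i j =>
    Fin.cases (motive := fun _ => ℂ) (Fin.cases (motive := fun _ => ℂ) 1 (fun _ => 0) j)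
      (fun i' => Fin.cases (motive := fun _ => ℂ) (fderiv ℂ g z (Pi.single i' 1))
        (fun j' => (1 : Matrix (Fin l) (Fin l) ℂ) i' j') j) i
  let v : Fin (l + 1) → ℂ := fun j => C j * Complex.exp ((m j : ℂ) * g z)
  have hP1 : P1.det = A.det := by
    rw [det_first_row P1 rfl (fun _ => rfl), ← Matrix.det_transpose A]
    rfl
  have hP2 : P2.det = 1 := by
    rw [det_first_row P2 rfl (fun _ => rfl), ← Matrix.det_one (n := Fin l) (R := ℂ)]
    rfl
  have hmat : P1 * N' = P2 * N * Matrix.diagonal v := by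
    ext i j
    rw [Matrix.mul_diagonal, Matrix.mul_apply, Matrix.mul_apply, Fin.sum_univ_succ,
      Fin.sum_univ_succ]
    refine Fin.cases ?_ (fun i => ?_) i
    · simp only [P1, P2, hN, hN', Matrix.of_apply, Fin.cases_zero, Fin.cases_succ, zero_mul,
        Finset.sum_const_zero, add_zero, one_mul, v, H]
      ring
    · simp only [P1, P2, hN, hN', Matrix.of_apply, Fin.cases_zero, Fin.cases_succ, zero_mul,
        zero_add, v, Matrix.one_apply, ite_mul, one_mul, Finset.sum_ite_eq, Finset.mem_univ,
        if_true, pderiv_eq_fderiv (hd _), pderiv_eq_fderiv (hd' _)]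
      have hA : HasFDerivAt (fun z : Fin l → ℂ => A.mulVec z + b)
          (LinearMap.toContinuousLinearMap A.mulVecLin) z :=
        ((LinearMap.toContinuousLinearMap A.mulVecLin).hasFDerivAt (x := z)).add_const b
      have e1 : HasFDerivAt (fun z => φ j τ' (A.mulVec z + b))
          ((fderiv ℂ (φ j τ') (A.mulVec z + b)).comp
            (LinearMap.toContinuousLinearMap A.mulVecLin)) z :=
        HasFDerivAt.comp z (hd' j _).hasFDerivAt hA
      have e2 := ((((hg z).hasFDerivAt.const_mul (m j : ℂ)).cexp.const_mul (C j)).mul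
        (hd j z).hasFDerivAt)
      have e3 : (fun z => φ j τ' (A.mulVec z + b)) =
        fun z => C j * Complex.exp ((m j : ℂ) * g z) * φ j τ z := funext (H j)
      rw [e3] at e1
      have e4 := congrArg (fun T : (Fin l → ℂ) →L[ℂ] ℂ => T (Pi.single i 1)) (e1.unique e2)
      have e5 : A.mulVec (Pi.single i 1) =
          ∑ k, A k i • (Pi.single k 1 : Fin l → ℂ) := by
        ext k
        simp [Finset.sum_apply, Pi.single_apply]
      simp only [ContinuousLinearMap.comp_apply, LinearMap.coe_toContinuousLinearMap',
        Matrix.mulVecLin_apply, _root_.add_apply, _root_.smul_apply,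
        smul_eq_mul] at e4
      rw [e5, map_sum] at e4
      simp only [map_smul, smul_eq_mul] at e4
      rw [e4]
      ring
  have hdet := congrArg Matrix.det hmat
  rw [Matrix.det_mul, Matrix.det_mul, Matrix.det_mul, hP1, hP2, Matrix.det_diagonal] at hdet
  have hv : ∏ j, v j = (∏ j, C j) * Complex.exp (((∑ j, m j : ℕ) : ℂ) * g z) := by
    simp only [v]
    rw [Finset.prod_mul_distrib, ← Complex.exp_sum, ← Finset.sum_mul]
    push_cast
    rfl
  rw [hv] at hdet
  have hJ' : jacJacobian m φ τ' (A.mulVec z + b) = N'.det := rfl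
  have hJ : jacJacobian m φ τ z = N.det := rfl
  rw [hJ, hJ', hdet]
  ring

lemma IsWeakJacobiForm.diff {l : ℕ} {M : Matrix (Fin l) (Fin l) ℤ} {k : ℤ} {t : ℕ}
    {f : ℂ → (Fin l → ℂ) → ℂ} (h : IsWeakJacobiForm M k t f) {τ : ℂ} (hτ : 0 < τ.im) :
    Differentiable ℂ (f τ) := by
  intro z
  have hx : (τ, z) ∈ ({τ : ℂ | 0 < τ.im} ×ˢ (Set.univ : Set (Fin l → ℂ))) :=
    ⟨hτ, Set.mem_univ _⟩
  have ho : IsOpen ({τ : ℂ | 0 < τ.im} ×ˢ (Set.univ : Set (Fin l → ℂ))) :=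
    (isOpen_lt continuous_const Complex.continuous_im).prod isOpen_univ
  have h1 := (h.1 _ hx).differentiableAt (ho.mem_nhds hx)
  exact DifferentiableAt.comp (f := fun z : Fin l → ℂ => (τ, z)) z h1
    ((differentiableAt_const τ).prodMk differentiableAt_id)

lemma pairC_differentiable {l : ℕ} (M : Matrix (Fin l) (Fin l) ℤ) :
    Differentiable ℂ (fun z : Fin l → ℂ => pairC M z z) := by
  unfold pairC; fun_prop

lemma pairC_differentiable' {l : ℕ} (M : Matrix (Fin l) (Fin l) ℤ) (x : Fin l → ℂ) :
    Differentiable ℂ (fun z : Fin l → ℂ => pairC M x z) := by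
  unfold pairC; fun_prop

lemma denom_ne {c d : ℤ} {a b : ℤ} (h : a * d - b * c = 1) {τ : ℂ} (hτ : 0 < τ.im) :
    (c : ℂ) * τ + (d : ℂ) ≠ 0 := by
  intro h0
  have him := congrArg Complex.im h0
  have hre := congrArg Complex.re h0
  simp at him hre
  rcases him with hc | ht
  · subst hc
    simp at hre
    subst hre
    simp at h
  · exact hτ.ne' ht

lemma mob_im {a b c d : ℤ} (h : a * d - b * c = 1) {τ : ℂ} (hτ : 0 < τ.im) :
    0 < (((a : ℂ) * τ + (b : ℂ)) / ((c : ℂ) * τ + (d : ℂ))).im := by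
  have hn := Complex.normSq_pos.2 (denom_ne h hτ)
  rw [Complex.div_im, ← sub_div]
  refine div_pos ?_ hn
  have h' : (a : ℝ) * d - b * c = 1 := by exact_mod_cast h
  simp
  have : a * τ.im * (c * τ.re + d) - (a * τ.re + b) * (c * τ.im) = (a * d - b * c) * τ.im := by
    ring
  rw [h'] at this
  linarith

lemma prod_zpow_eq {ι : Type*} (s : Finset ι) (w : ℂ) (hw : w ≠ 0) (k : ι → ℤ) :
    ∏ j ∈ s, w ^ k j = w ^ (∑ j ∈ s, k j) := by
  classical
  induction s using Finset.induction_on with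
  | empty => simp
  | insert a s ha ih => rw [Finset.prod_insert ha, Finset.sum_insert ha, zpow_add₀ hw, ih]

/-- The Jacobian `J(φ_1,…,φ_{l+1})` of `l+1` `G`-invariant weak Jacobi
forms of weights `k_j` and indices `m_j` is a weak Jacobi form of weight `l + ∑ k_j` and
index `∑ m_j` associated to `L`, and `J(τ, σ(𝔷)) = det(σ) · J(τ, 𝔷)` for every `σ ∈ G`. -/
theorem jacobian_is_weak_jacobi_form {l : ℕ}
    (M : Matrix (Fin l) (Fin l) ℤ) (hM : IsEvenPosDef M)
    (G : Set (Matrix (Fin l) (Fin l) ℤ)) (hG : IsOrthSubgroup M G)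
    (kj : Fin (l + 1) → ℤ) (mj : Fin (l + 1) → ℕ)
    (φ : Fin (l + 1) → ℂ → (Fin l → ℂ) → ℂ)
    (hφ : ∀ j, IsWeakJacobiForm M (kj j) (mj j) (φ j))
    (hφG : ∀ j, GInvariant G (φ j)) :
    IsWeakJacobiForm M ((l : ℤ) + ∑ j, kj j) (∑ j, mj j) (jacJacobian mj φ) ∧
    ∀ σ ∈ G, ∀ τ : ℂ, 0 < τ.im → ∀ z : Fin l → ℂ,
      jacJacobian mj φ τ ((σ.map (Int.cast : ℤ → ℂ)).mulVec z) =
        (σ.det : ℂ) * jacJacobian mj φ τ z := by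
  have hFR : HasFR M (jacJacobian mj φ) := HasFR.jac mj fun j => (hφ j).2.2.2
  refine ⟨⟨hFR.differentiableOn, ?_, ?_, hFR⟩, ?_⟩
  · intro a b c d hdet τ hτ z
    have hne := denom_ne hdet hτ
    set w : ℂ := (c : ℂ) * τ + (d : ℂ) with hw
    have key := jac_transform mj φ τ (((a : ℂ) * τ + (b : ℂ)) / w)
      (w⁻¹ • (1 : Matrix (Fin l) (Fin l) ℂ)) 0 (fun j => (hφ j).diff hτ)
      (fun j => (hφ j).diff (mob_im hdet hτ))
      (fun z => ((Real.pi : ℂ) * Complex.I * (c : ℂ) / w) * pairC M z z)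
      ((pairC_differentiable M).const_mul _) (fun j => w ^ kj j) ?_ z
    · have e : (w⁻¹ • (1 : Matrix (Fin l) (Fin l) ℂ)).mulVec z + 0 = fun i => z i / w := by
        ext i
        simp [Matrix.smul_mulVec, div_eq_inv_mul]
      rw [e, Matrix.det_smul, Matrix.det_one, mul_one, Fintype.card_fin, inv_pow] at key
      have hp : ∏ j, w ^ kj j = w ^ (∑ j, kj j) := by
        exact prod_zpow_eq _ w hne kj
      rw [inv_mul_eq_iff_eq_mul₀ (pow_ne_zero _ hne), hp] at key
      rw [key, zpow_add₀ hne, zpow_natCast]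
      have : ((∑ j, mj j : ℕ) : ℂ) * (((Real.pi : ℂ) * Complex.I * (c : ℂ) / w) * pairC M z z) =
        ((∑ j, mj j : ℕ) : ℂ) * (Real.pi : ℂ) * Complex.I * (c : ℂ) * pairC M z z / w := by ring
      rw [this]
      ring
    · intro j z
      have e : (w⁻¹ • (1 : Matrix (Fin l) (Fin l) ℂ)).mulVec z + 0 = fun i => z i / w := by
        ext i
        simp [Matrix.smul_mulVec, div_eq_inv_mul]
      rw [e, (hφ j).2.1 a b c d hdet τ hτ z]
      have : (mj j : ℂ) * (((Real.pi : ℂ) * Complex.I * (c : ℂ) / w) * pairC M z z) =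
        (mj j : ℂ) * (Real.pi : ℂ) * Complex.I * (c : ℂ) * pairC M z z / w := by ring
      rw [this]
  · intro x y τ hτ z
    have e : ∀ z : Fin l → ℂ, (1 : Matrix (Fin l) (Fin l) ℂ).mulVec z +
        (fun i => (x i : ℂ) * τ + (y i : ℂ)) = fun i => z i + (x i : ℂ) * τ + (y i : ℂ) := by
      intro z
      ext i
      simp [add_assoc]
    have key := jac_transform mj φ τ τ 1 (fun i => (x i : ℂ) * τ + (y i : ℂ))
      (fun j => (hφ j).diff hτ) (fun j => (hφ j).diff hτ)
      (fun z => (-((Real.pi : ℂ) * Complex.I)) *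
        (pairC M (zc x) (zc x) * τ + 2 * pairC M (zc x) z))
      ((((pairC_differentiable' M (zc x)).const_mul 2).const_add _).const_mul _)
      (fun _ => 1) ?_ z
    · rw [e, Matrix.det_one, one_mul, Finset.prod_const_one, one_mul] at key
      rw [key]
      congr 2
      ring
    · intro j z
      rw [e, (hφ j).2.2.1 x y τ hτ z, one_mul]
      congr 2
      ring
  · intro σ hσ τ hτ z
    have key := jac_transform mj φ τ τ (σ.map (Int.cast : ℤ → ℂ)) 0
      (fun j => (hφ j).diff hτ) (fun j => (hφ j).diff hτ) (fun _ => 0)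
      (differentiable_const 0) (fun _ => 1) ?_ z
    · have hd : (σ.map (Int.cast : ℤ → ℂ)).det = (σ.det : ℂ) :=
        ((Int.castRingHom ℂ).map_det σ).symm
      rw [hd] at key
      simp only [add_zero, Finset.prod_const_one, mul_zero, Complex.exp_zero, one_mul] at key
      obtain ⟨σ', -, h1, -⟩ := hG.inv_mem σ hσ
      have hu : σ.det * σ'.det = 1 := by rw [← Matrix.det_mul, h1, Matrix.det_one]
      have hsq : σ.det * σ.det = 1 := by
        rcases Int.isUnit_iff.1 (IsUnit.of_mul_eq_one _ hu) with h | h <;> rw [h] <;> norm_num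
      have hsq' : (σ.det : ℂ) * (σ.det : ℂ) = 1 := by exact_mod_cast hsq
      rw [← key, ← mul_assoc, hsq', one_mul]
    · intro j z
      simp only [add_zero, mul_zero, Complex.exp_zero, one_mul]
      exact hφG j σ hσ τ hτ z

end
end

section
/- Let R be an irreducible root system. The weak Jacobi form Φ_R has a non-zero Fourier coefficient of type f(0,ℓ); that is, the q⁰-term of the Fourier expansion of Φ_R is not identically zero. -/
open Complex Matrix

noncomputable section

/-- The standard bilinear form (dot product) on `ℝ^l`. -/
def dotR {l : ℕ} (v w : Fin l → ℝ) : ℝ := ∑ i, v i * w i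

/-- The standard bilinear form extended to `ℂ^l`. -/
def dotCC {l : ℕ} (v w : Fin l → ℂ) : ℂ := ∑ i, v i * w i

/-- A real vector viewed as a complex vector. -/
def rc {l : ℕ} (x : Fin l → ℝ) : Fin l → ℂ := fun i => (x i : ℂ)

/-- An irreducible (crystallographic, reduced) root system of rank `l`, realized in `ℝ^l`
with the standard bilinear form, whose roots span an integral lattice. -/
structure IrreducibleRootSystem (l : ℕ) where
  roots : Finset (Fin l → ℝ)
  nonempty : roots.Nonempty
  zero_not_mem : (0 : Fin l → ℝ) ∉ roots
  spans : Submodule.span ℝ (roots : Set (Fin l → ℝ)) = ⊤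
  reduced : ∀ r ∈ roots, ∀ c : ℝ, c • r ∈ roots → c = 1 ∨ c = -1
  crystal : ∀ r ∈ roots, ∀ s ∈ roots, ∃ n : ℤ, 2 * dotR r s = (n : ℝ) * dotR r r
  reflect : ∀ r ∈ roots, ∀ s ∈ roots, s - (2 * dotR r s / dotR r r) • r ∈ roots
  integral : ∀ r ∈ roots, ∀ s ∈ roots, ∃ n : ℤ, dotR r s = (n : ℝ)
  irreducible : ∀ S : Finset (Fin l → ℝ), S ⊆ roots →
    (∀ r ∈ S, ∀ s ∈ roots, s ∉ S → dotR r s = 0) → S = ∅ ∨ S = roots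

/-- The coroot `r^∨ = 2r/(r,r)` of `r`. -/
def coroot {l : ℕ} (r : Fin l → ℝ) : Fin l → ℝ := (2 / dotR r r) • r

/-- The lattice spanned by the roots of `R` is even. -/
def RootLatticeEven {l : ℕ} (R : IrreducibleRootSystem l) : Prop :=
  ∀ r ∈ R.roots, ∃ n : ℤ, dotR r r = 2 * (n : ℝ)

/-- `ε` is the rescaling factor of the bilinear form of the root lattice: `1` if it is
already even and `2` if it is odd; `L_R` is the root lattice with form `ε·(·,·)`. -/
def EpsFor {l : ℕ} (R : IrreducibleRootSystem l) (ε : ℕ) : Prop :=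
  (RootLatticeEven R → ε = 1) ∧ (¬ RootLatticeEven R → ε = 2)

/-- The root lattice `Q(R)` spanned by the roots. -/
def rootLattice {l : ℕ} (R : IrreducibleRootSystem l) : AddSubgroup (Fin l → ℝ) :=
  AddSubgroup.closure (R.roots : Set (Fin l → ℝ))

/-- `ℓ` belongs to the dual lattice `L_R^*`. -/
def InDualR {l : ℕ} (R : IrreducibleRootSystem l) (ε : ℕ) (ℓ : Fin l → ℝ) : Prop :=
  ∀ r ∈ R.roots, ∃ n : ℤ, (ε : ℝ) * dotR ℓ r = (n : ℝ)

/-- A Fourier-series representation of `φ` supported on `n ≥ 0` and `ℓ ∈ L_R^*`. -/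
def FourierRepR {l : ℕ} (R : IrreducibleRootSystem l) (ε : ℕ)
    (φ : ℂ → (Fin l → ℂ) → ℂ) (c : ℕ → (Fin l → ℝ) → ℂ) : Prop :=
  (∀ n ℓ, c n ℓ ≠ 0 → InDualR R ε ℓ) ∧
  ∀ τ : ℂ, 0 < τ.im → ∀ z : Fin l → ℂ,
    HasSum (fun p : ℕ × (Fin l → ℝ) =>
      c p.1 p.2 * Complex.exp (2 * (Real.pi : ℂ) * Complex.I *
        ((p.1 : ℂ) * τ + (ε : ℂ) * dotCC (rc p.2) z))) (φ τ z)

/-- `φ` is a weak Jacobi form of weight `k` and index `t` associated to the even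
positive definite lattice `L_R` attached to the root system `R`. -/
def IsWeakJacobiFormR {l : ℕ} (R : IrreducibleRootSystem l) (ε : ℕ) (k : ℤ) (t : ℕ)
    (φ : ℂ → (Fin l → ℂ) → ℂ) : Prop :=
  (DifferentiableOn ℂ (fun p : ℂ × (Fin l → ℂ) => φ p.1 p.2)
    ({τ : ℂ | 0 < τ.im} ×ˢ (Set.univ : Set (Fin l → ℂ)))) ∧
  (∀ a b c d : ℤ, a * d - b * c = 1 → ∀ τ : ℂ, 0 < τ.im → ∀ z : Fin l → ℂ,
    φ (((a : ℂ) * τ + (b : ℂ)) / ((c : ℂ) * τ + (d : ℂ)))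
        (fun i => z i / ((c : ℂ) * τ + (d : ℂ))) =
      ((c : ℂ) * τ + (d : ℂ)) ^ k *
        Complex.exp ((t : ℂ) * (Real.pi : ℂ) * Complex.I * (c : ℂ) *
          ((ε : ℂ) * dotCC z z) / ((c : ℂ) * τ + (d : ℂ))) * φ τ z) ∧
  (∀ x y : Fin l → ℝ, x ∈ rootLattice R → y ∈ rootLattice R →
    ∀ τ : ℂ, 0 < τ.im → ∀ z : Fin l → ℂ,
    φ τ (fun i => z i + (x i : ℂ) * τ + (y i : ℂ)) =
      Complex.exp (-(t : ℂ) * (Real.pi : ℂ) * Complex.I *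
        ((ε : ℂ) * dotCC (rc x) (rc x) * τ + 2 * (ε : ℂ) * dotCC (rc x) z)) * φ τ z) ∧
  (∃ c : ℕ → (Fin l → ℝ) → ℂ, FourierRepR R ε φ c)

/-- The linear form `v ↦ (r, v)`. -/
def dotLin {l : ℕ} (r : Fin l → ℝ) : (Fin l → ℝ) →ₗ[ℝ] ℝ where
  toFun v := dotR r v
  map_add' u v := by
    simp only [dotR, Pi.add_apply, mul_add, Finset.sum_add_distrib]
  map_smul' c v := by
    simp only [dotR, Pi.smul_apply, smul_eq_mul, RingHom.id_apply, Finset.mul_sum]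
    exact Finset.sum_congr rfl fun i _ => by ring

/-- The linear form `v ↦ ⟨r^∨, v⟩ = 2(r,v)/(r,r)`. -/
def corootForm {l : ℕ} (r : Fin l → ℝ) : (Fin l → ℝ) →ₗ[ℝ] ℝ :=
  (2 / dotR r r) • dotLin r

/-- The Weyl group `W(R)`: the group of linear automorphisms of `ℝ^l` generated by the
reflections in the roots of `R`. -/
def weylGroup {l : ℕ} (R : IrreducibleRootSystem l) :
    Subgroup ((Fin l → ℝ) ≃ₗ[ℝ] (Fin l → ℝ)) :=
  Subgroup.closure
    {w | ∃ r ∈ R.roots, ∃ h : corootForm r r = 2, w = Module.reflection h}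

/-- The action of a real linear automorphism on the complexification `ℂ^l`. -/
def actW {l : ℕ} (w : (Fin l → ℝ) ≃ₗ[ℝ] (Fin l → ℝ)) (z : Fin l → ℂ) : Fin l → ℂ :=
  fun i => ∑ j, ((LinearMap.toMatrix' w.toLinearMap) i j : ℂ) * z j

/-- `φ` is invariant under the action of the Weyl group `W(R)` on the lattice variable. -/
def WeylInvariant {l : ℕ} (R : IrreducibleRootSystem l) (φ : ℂ → (Fin l → ℂ) → ℂ) : Prop :=
  ∀ w ∈ weylGroup R, ∀ τ : ℂ, 0 < τ.im → ∀ z : Fin l → ℂ, φ τ (actW w z) = φ τ z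

/-- The Jacobi theta function
`ϑ(τ,z) = q^{1/8}(ζ^{1/2}-ζ^{-1/2}) ∏_{n≥1} (1-q^n ζ)(1-q^n ζ^{-1})(1-q^n)`. -/
def jtheta (τ z : ℂ) : ℂ :=
  Complex.exp ((Real.pi : ℂ) * Complex.I * τ / 4) *
    (Complex.exp ((Real.pi : ℂ) * Complex.I * z) -
      Complex.exp (-((Real.pi : ℂ) * Complex.I * z))) *
    ∏' n : ℕ,
      ((1 - Complex.exp (2 * (Real.pi : ℂ) * Complex.I * ((n : ℂ) + 1) * τ) *
            Complex.exp (2 * (Real.pi : ℂ) * Complex.I * z)) *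
       (1 - Complex.exp (2 * (Real.pi : ℂ) * Complex.I * ((n : ℂ) + 1) * τ) *
            Complex.exp (-(2 * (Real.pi : ℂ) * Complex.I * z))) *
       (1 - Complex.exp (2 * (Real.pi : ℂ) * Complex.I * ((n : ℂ) + 1) * τ)))

/-- The Dedekind eta function `η(τ) = q^{1/24} ∏_{n≥1} (1-q^n)`. -/
def dedekindEta (τ : ℂ) : ℂ :=
  Complex.exp ((Real.pi : ℂ) * Complex.I * τ / 12) *
    ∏' n : ℕ, (1 - Complex.exp (2 * (Real.pi : ℂ) * Complex.I * ((n : ℂ) + 1) * τ))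

/-- `P` is a system of positive roots of `R`, cut out by a linear functional. -/
def IsPositiveSystem {l : ℕ} (R : IrreducibleRootSystem l)
    (P : Finset (Fin l → ℝ)) : Prop :=
  P ⊆ R.roots ∧ ∃ f : Fin l → ℝ, (∀ r ∈ R.roots, dotR f r ≠ 0) ∧
    ∀ r ∈ R.roots, (r ∈ P ↔ 0 < dotR f r)

/-- The theta block `Φ_R(τ,𝔷) = ∏_{r ∈ R^∨, r > 0} ϑ(τ,(r,𝔷))/η(τ)^3`, the product
ranging over the positive roots of the dual root system `R^∨` (equivalently, over the
coroots of the positive roots in `P`). -/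
def PhiR {l : ℕ} (P : Finset (Fin l → ℝ)) (τ : ℂ) (z : Fin l → ℂ) : ℂ :=
  ∏ r ∈ P, (jtheta τ (dotCC (rc (coroot r)) z) / dedekindEta τ ^ 3)


/-! ### Generalised Fourier expansions -/

/-- The elementary exponential `q^n e^{2πi(v,z)}`. -/
def ew {l : ℕ} (n : ℕ) (v : Fin l → ℝ) (τ : ℂ) (z : Fin l → ℂ) : ℂ :=
  Complex.exp (2 * (Real.pi : ℂ) * Complex.I * ((n : ℂ) * τ + dotCC (rc v) z))

lemma dotCC_rc_add {l : ℕ} (v w : Fin l → ℝ) (z : Fin l → ℂ) :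
    dotCC (rc (v + w)) z = dotCC (rc v) z + dotCC (rc w) z := by
  simp [dotCC, rc, add_mul, Finset.sum_add_distrib]

lemma dotCC_rc_smul {l : ℕ} (c : ℝ) (w : Fin l → ℝ) (z : Fin l → ℂ) :
    dotCC (rc (c • w)) z = (c : ℂ) * dotCC (rc w) z := by
  simp [dotCC, rc, Finset.mul_sum, mul_assoc]

lemma dotCC_rc_zero {l : ℕ} (z : Fin l → ℂ) :
    dotCC (rc (0 : Fin l → ℝ)) z = 0 := by
  simp [dotCC, rc]

lemma dotR_eq {l : ℕ} (v w : Fin l → ℝ) : dotR v w = v ⬝ᵥ w := rfl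

lemma ew_mul {l : ℕ} (n m : ℕ) (v w : Fin l → ℝ) (τ : ℂ) (z : Fin l → ℂ) :
    ew (n + m) (v + w) τ z = ew n v τ z * ew m w τ z := by
  simp only [ew, dotCC_rc_add, ← Complex.exp_add]
  congr 1
  push_cast
  ring

/-- `φ` is an absolutely convergent sum of exponentials, with exponents in the coset `ρ + L`, and
its `q⁰`-part has a unique term of maximal height with respect to `f`. -/
def GRep {l : ℕ} (L : AddSubgroup (Fin l → ℝ)) (f : Fin l → ℝ) (ρ : Fin l → ℝ)
    (φ : ℂ → (Fin l → ℂ) → ℂ) : Prop :=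
  ∃ (ι : Type) (a : ι → ℂ) (n : ι → ℕ) (v : ι → (Fin l → ℝ)),
    (∀ τ : ℂ, 0 < τ.im → ∀ z, HasSum (fun i => a i * ew (n i) (v i) τ z) (φ τ z)) ∧
    (∀ i, v i - ρ ∈ L) ∧
    ∃ i₀, a i₀ ≠ 0 ∧ n i₀ = 0 ∧ ∀ i, i ≠ i₀ → n i = 0 → dotR f (v i) < dotR f (v i₀)

lemma GRep.mul {l : ℕ} {L : AddSubgroup (Fin l → ℝ)} {f ρ ρ' : Fin l → ℝ}
    {φ ψ : ℂ → (Fin l → ℂ) → ℂ} (h : GRep L f ρ φ) (h' : GRep L f ρ' ψ) :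
    GRep L f (ρ + ρ') (fun τ z => φ τ z * ψ τ z) := by
  obtain ⟨ι, a, n, v, hs, hv, i₀, ha, hn, hi⟩ := h
  obtain ⟨κ, b, m, w, hs', hw, j₀, hb, hm, hj⟩ := h'
  refine ⟨ι × κ, fun p => a p.1 * b p.2, fun p => n p.1 + m p.2, fun p => v p.1 + w p.2,
    ?_, ?_, (i₀, j₀), mul_ne_zero ha hb, by simp [hn, hm], ?_⟩
  · intro τ hτ z
    have h1 := hs τ hτ z
    have h2 := hs' τ hτ z
    have hn1 := h1.summable.norm
    have hn2 := h2.summable.norm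
    have hsm := summable_mul_of_summable_norm hn1 hn2
    have h3 := HasSum.mul h1 h2 hsm
    refine h3.congr_fun ?_
    intro p
    simp only [ew_mul]
    ring
  · rintro ⟨i, j⟩
    have := L.add_mem (hv i) (hw j)
    convert this using 1
    simp only
    abel
  · rintro ⟨i, j⟩ hne h0
    simp only at h0 ⊢
    have hn0 : n i = 0 := by omega
    have hm0 : m j = 0 := by omega
    simp only [dotR_eq, dotProduct_add] at hi hj ⊢
    by_cases hii : i = i₀
    · subst hii
      have : j ≠ j₀ := fun h => hne (by rw [h])
      have := hj j this hm0
      linarith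
    · have h1 := hi i hii hn0
      by_cases hjj : j = j₀
      · subst hjj; linarith
      · have := hj j hjj hm0
        linarith

lemma GRep.congr {l : ℕ} {L : AddSubgroup (Fin l → ℝ)} {f ρ : Fin l → ℝ}
    {φ ψ : ℂ → (Fin l → ℂ) → ℂ} (h : GRep L f ρ φ)
    (e : ∀ τ : ℂ, 0 < τ.im → ∀ z, φ τ z = ψ τ z) : GRep L f ρ ψ := by
  obtain ⟨ι, a, n, v, hs, hv, hi⟩ := h
  exact ⟨ι, a, n, v, fun τ hτ z => e τ hτ z ▸ hs τ hτ z, hv, hi⟩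

lemma GRep.one {l : ℕ} (L : AddSubgroup (Fin l → ℝ)) (f : Fin l → ℝ) :
    GRep L f 0 (fun _ _ => 1) := by
  refine ⟨Unit, fun _ => 1, fun _ => 0, fun _ => 0, ?_, ?_, (), one_ne_zero, rfl, ?_⟩
  · intro τ _ z
    simpa [ew, dotCC_rc_zero] using hasSum_unique (fun _ : Unit => (1 : ℂ))
  · intro _
    simp
  · intro i h
    exact absurd rfl h

lemma GRep.prod {l : ℕ} {L : AddSubgroup (Fin l → ℝ)} {f : Fin l → ℝ}
    {α : Type*} (S : Finset α) (ρ : α → Fin l → ℝ) (φ : α → ℂ → (Fin l → ℂ) → ℂ)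
    (h : ∀ r ∈ S, GRep L f (ρ r) (φ r)) :
    GRep L f (∑ r ∈ S, ρ r) (fun τ z => ∏ r ∈ S, φ r τ z) := by
  classical
  induction S using Finset.induction_on with
  | empty => simpa using GRep.one L f
  | insert a S ha ih =>
    simp only [Finset.sum_insert ha, Finset.prod_insert ha]
    exact (h a (by simp)).mul (ih fun r hr => h r (by simp [hr]))

/-- The factor `ζ^{1/2} - ζ^{-1/2}`. -/
lemma GRep.sine {l : ℕ} {L : AddSubgroup (Fin l → ℝ)} {f u : Fin l → ℝ}
    (hu : u ∈ L) (hf : 0 < dotR f u) :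
    GRep L f ((1 / 2 : ℝ) • u) (fun _ z =>
      Complex.exp ((Real.pi : ℂ) * Complex.I * dotCC (rc u) z) -
      Complex.exp (-((Real.pi : ℂ) * Complex.I * dotCC (rc u) z))) := by
  refine ⟨Bool, fun b => if b then 1 else -1, fun _ => 0,
    fun b => if b then (1 / 2 : ℝ) • u else (-1 / 2 : ℝ) • u, ?_, ?_, true, by simp, rfl, ?_⟩
  · intro τ _ z
    have h0 := hasSum_fintype (fun b : Bool => (if b then (1 : ℂ) else -1) *
      ew 0 (if b then (1 / 2 : ℝ) • u else (-1 / 2 : ℝ) • u) τ z)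
    convert h0 using 1
    simp only [Fintype.sum_bool, if_true, ew, dotCC_rc_smul]
    simp only [Bool.false_eq_true, if_false, one_mul, dotCC_rc_smul]
    rw [neg_one_mul, ← sub_eq_add_neg]
    congr 2 <;> · push_cast; ring
  · intro b
    cases b
    · have : (-1 / 2 : ℝ) • u - (1 / 2 : ℝ) • u = -u := by
        rw [← sub_smul]; norm_num
      simp only [Bool.false_eq_true, if_false, this]
      exact L.neg_mem hu
    · simp
  · intro b hb _
    cases b
    · simp only [dotR_eq, dotProduct_smul, smul_eq_mul, if_true, Bool.false_eq_true, if_false]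
        at hf ⊢
      linarith
    · simp at hb

lemma norm_q_lt_one {τ : ℂ} (hτ : 0 < τ.im) :
    ‖Complex.exp (2 * (Real.pi : ℂ) * Complex.I * τ)‖ < 1 :=
  UpperHalfPlane.norm_exp_two_pi_I_lt_one ⟨τ, hτ⟩

lemma exp_q_pow (τ : ℂ) (n : ℕ) :
    Complex.exp (2 * (Real.pi : ℂ) * Complex.I * ((n : ℂ) + 1) * τ) =
      Complex.exp (2 * (Real.pi : ℂ) * Complex.I * τ) ^ (n + 1) := by
  rw [← Complex.exp_nat_mul]
  congr 1
  push_cast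
  ring

lemma summable_q_mul {τ : ℂ} (hτ : 0 < τ.im) (x : ℂ) :
    Summable fun n : ℕ =>
      ‖-(Complex.exp (2 * (Real.pi : ℂ) * Complex.I * ((n : ℂ) + 1) * τ) * x)‖ := by
  simp only [exp_q_pow, norm_neg, norm_mul, norm_pow]
  exact ((summable_nat_add_iff 1).mpr
    (summable_geometric_of_lt_one (norm_nonneg _) (norm_q_lt_one hτ))).mul_right _

lemma multipliable_q_mul {τ : ℂ} (hτ : 0 < τ.im) (x : ℂ) :
    Multipliable fun n : ℕ =>
      (1 - Complex.exp (2 * (Real.pi : ℂ) * Complex.I * ((n : ℂ) + 1) * τ) * x) := by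
  simpa [sub_eq_add_neg] using multipliable_one_add_of_summable (summable_q_mul hτ x)

/-- The factor `∏ (1 - q^n e^{2πi(u,z)})`. -/
lemma GRep.euler {l : ℕ} {L : AddSubgroup (Fin l → ℝ)} {f u : Fin l → ℝ} (hu : u ∈ L) :
    GRep L f 0 (fun τ z => ∏' n : ℕ,
      (1 - Complex.exp (2 * (Real.pi : ℂ) * Complex.I * ((n : ℂ) + 1) * τ) *
        Complex.exp (2 * (Real.pi : ℂ) * Complex.I * dotCC (rc u) z))) := by
  refine ⟨Finset ℕ, fun S => (-1) ^ S.card, fun S => ∑ k ∈ S, (k + 1),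
    fun S => (S.card : ℝ) • u, ?_, ?_, ∅, by simp, by simp, ?_⟩
  · intro τ hτ z
    have hs := summable_finsetProd_of_summable_norm (summable_q_mul hτ
      (Complex.exp (2 * (Real.pi : ℂ) * Complex.I * dotCC (rc u) z)))
    have h1 := tprod_one_add hs
    simp only [← sub_eq_add_neg] at h1
    beta_reduce
    rw [h1]
    refine hs.hasSum.congr_fun ?_
    intro S
    rw [Finset.prod_neg, Finset.prod_mul_distrib, ← Complex.exp_sum, Finset.prod_const,
      ← Complex.exp_nat_mul, ← Complex.exp_add]
    simp only [ew, dotCC_rc_smul]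
    congr 2
    rw [← Finset.sum_mul, ← Finset.mul_sum]
    push_cast
    ring
  · intro S
    beta_reduce
    rw [sub_zero, Nat.cast_smul_eq_nsmul]
    exact L.nsmul_mem hu _
  · intro S hS h0
    exfalso
    apply hS
    rw [Finset.sum_eq_zero_iff] at h0
    apply Finset.eq_empty_of_forall_notMem
    intro x hx
    have := h0 x hx
    omega

/-- The inverse Euler product. -/
def invEuler (q : ℂ) : ℂ := (∏' n : ℕ, (1 - q ^ (n + 1)))⁻¹

lemma tprod_ne_zero {q : ℂ} (hq : ‖q‖ < 1) : ∏' n : ℕ, (1 - q ^ (n + 1)) ≠ 0 := by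
  simp only [sub_eq_add_neg]
  refine tprod_one_add_ne_zero_of_summable ?_ ?_
  · intro n h
    have h1 : q ^ (n + 1) = 1 := by linear_combination -h
    have h2 : ‖q‖ ^ (n + 1) = 1 := by rw [← norm_pow, h1, norm_one]
    exact absurd h2 (pow_lt_one₀ (norm_nonneg _) hq (by omega)).ne
  · simpa using (summable_nat_add_iff 1).mpr (summable_geometric_of_lt_one (norm_nonneg _) hq)

lemma differentiableOn_invEuler : DifferentiableOn ℂ invEuler (Metric.ball 0 1) :=
  ModularForm.differentiableOn_tprod_one_sub_pow.inv fun q hq =>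
    tprod_ne_zero (by simpa using hq)

lemma GRep.invEuler {l : ℕ} (L : AddSubgroup (Fin l → ℝ)) (f : Fin l → ℝ) :
    GRep L f 0 (fun τ _ => invEuler (Complex.exp (2 * (Real.pi : ℂ) * Complex.I * τ))) := by
  refine ⟨ℕ, fun n => (n.factorial : ℂ)⁻¹ * iteratedDeriv n _root_.invEuler 0, fun n => n,
    fun _ => 0, ?_, ?_, 0, ?_, rfl, ?_⟩
  · intro τ hτ z
    have hq : Complex.exp (2 * (Real.pi : ℂ) * Complex.I * τ) ∈ Metric.ball (0 : ℂ) 1 := by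
      simpa using norm_q_lt_one hτ
    refine (Complex.hasSum_taylorSeries_on_ball differentiableOn_invEuler hq).congr_fun ?_
    intro n
    simp only [ew, dotCC_rc_zero, add_zero, sub_zero, smul_eq_mul, ← Complex.exp_nat_mul]
    rw [show 2 * (Real.pi : ℂ) * Complex.I * ((n : ℂ) * τ) =
      (n : ℂ) * (2 * (Real.pi : ℂ) * Complex.I * τ) by ring]
    ring
  · intro _
    simp
  · simp [_root_.invEuler]
  · intro i h h'
    exact absurd h' h

lemma jtheta_div_eta {τ : ℂ} (hτ : 0 < τ.im) (w : ℂ) :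
    jtheta τ w / dedekindEta τ ^ 3 =
      (Complex.exp ((Real.pi : ℂ) * Complex.I * w) -
        Complex.exp (-((Real.pi : ℂ) * Complex.I * w))) *
      (∏' n : ℕ, (1 - Complex.exp (2 * (Real.pi : ℂ) * Complex.I * ((n : ℂ) + 1) * τ) *
        Complex.exp (2 * (Real.pi : ℂ) * Complex.I * w))) *
      (∏' n : ℕ, (1 - Complex.exp (2 * (Real.pi : ℂ) * Complex.I * ((n : ℂ) + 1) * τ) *
        Complex.exp (-(2 * (Real.pi : ℂ) * Complex.I * w)))) *
      invEuler (Complex.exp (2 * (Real.pi : ℂ) * Complex.I * τ)) *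
      invEuler (Complex.exp (2 * (Real.pi : ℂ) * Complex.I * τ)) := by
  have hA := multipliable_q_mul hτ (Complex.exp (2 * (Real.pi : ℂ) * Complex.I * w))
  have hB := multipliable_q_mul hτ (Complex.exp (-(2 * (Real.pi : ℂ) * Complex.I * w)))
  have hC := multipliable_q_mul hτ 1
  simp only [mul_one] at hC
  have hne := tprod_ne_zero (norm_q_lt_one hτ)
  unfold jtheta dedekindEta invEuler
  rw [(hA.mul hB).tprod_mul hC, hA.tprod_mul hB, mul_pow, ← Complex.exp_nat_mul]
  have h3 : ((3 : ℕ) : ℂ) * ((Real.pi : ℂ) * Complex.I * τ / 12) =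
    (Real.pi : ℂ) * Complex.I * τ / 4 := by push_cast; ring
  rw [h3]
  have hE := Complex.exp_ne_zero ((Real.pi : ℂ) * Complex.I * τ / 4)
  simp only [exp_q_pow] at *
  generalize (∏' n : ℕ, (1 - Complex.exp (2 * (Real.pi : ℂ) * Complex.I * τ) ^ (n + 1))) = C at *
  generalize (∏' n : ℕ, (1 - Complex.exp (2 * (Real.pi : ℂ) * Complex.I * τ) ^ (n + 1) *
        Complex.exp (2 * (Real.pi : ℂ) * Complex.I * w))) = A at *
  generalize (∏' n : ℕ, (1 - Complex.exp (2 * (Real.pi : ℂ) * Complex.I * τ) ^ (n + 1) *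
        Complex.exp (-(2 * (Real.pi : ℂ) * Complex.I * w)))) = B at *
  field_simp

lemma GRep.factor {l : ℕ} {L : AddSubgroup (Fin l → ℝ)} {f u : Fin l → ℝ}
    (hu : u ∈ L) (hf : 0 < dotR f u) :
    GRep L f ((1 / 2 : ℝ) • u) (fun τ z =>
      jtheta τ (dotCC (rc u) z) / dedekindEta τ ^ 3) := by
  have h := ((((GRep.sine hu hf).mul (GRep.euler (f := f) hu)).mul
    (GRep.euler (f := f) (L.neg_mem hu))).mul (GRep.invEuler L f)).mul (GRep.invEuler L f)
  simp only [add_zero] at h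
  refine h.congr ?_
  intro τ hτ z
  rw [jtheta_div_eta hτ]
  have : dotCC (rc (-u)) z = - dotCC (rc u) z := by
    rw [← neg_one_smul ℝ u, dotCC_rc_smul]; simp
  simp only [this, mul_neg]

/-! ### Integrality -/

/-- Vectors pairing integrally with all roots. -/
def dualL {l : ℕ} (R : IrreducibleRootSystem l) : AddSubgroup (Fin l → ℝ) where
  carrier := {v | ∀ r ∈ R.roots, ∃ n : ℤ, dotR v r = (n : ℝ)}
  zero_mem' := fun r _ => ⟨0, by simp [dotR]⟩
  add_mem' := by
    intro v w hv hw r hr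
    obtain ⟨n, hn⟩ := hv r hr
    obtain ⟨m, hm⟩ := hw r hr
    refine ⟨n + m, ?_⟩
    rw [dotR_eq] at *
    rw [add_dotProduct, hn, hm]
    push_cast
    rfl
  neg_mem' := by
    intro v hv r hr
    obtain ⟨n, hn⟩ := hv r hr
    refine ⟨-n, ?_⟩
    rw [dotR_eq] at *
    rw [neg_dotProduct, hn]
    push_cast
    rfl

lemma dotR_self_pos {l : ℕ} {v : Fin l → ℝ} (h : v ≠ 0) : 0 < dotR v v := by
  have h0 : 0 ≤ dotR v v := Finset.sum_nonneg fun i _ => mul_self_nonneg _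
  refine lt_of_le_of_ne h0 fun h1 => h ?_
  exact dotProduct_self_eq_zero.mp h1.symm

lemma root_pos {l : ℕ} (R : IrreducibleRootSystem l) {r : Fin l → ℝ} (hr : r ∈ R.roots) :
    0 < dotR r r :=
  dotR_self_pos fun h => R.zero_not_mem (h ▸ hr)

lemma neg_root {l : ℕ} (R : IrreducibleRootSystem l) {r : Fin l → ℝ} (hr : r ∈ R.roots) :
    -r ∈ R.roots := by
  have h := R.reflect r hr r hr
  have hp := (root_pos R hr).ne'
  rw [mul_div_assoc, div_self hp] at h
  convert h using 1
  rw [mul_one, two_smul]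
  abel

lemma dotR_coroot {l : ℕ} (s r : Fin l → ℝ) :
    dotR (coroot s) r = 2 * dotR s r / dotR s s := by
  simp only [coroot, dotR_eq, smul_dotProduct, smul_eq_mul]
  ring

lemma coroot_mem_dualL {l : ℕ} (R : IrreducibleRootSystem l) {s : Fin l → ℝ}
    (hs : s ∈ R.roots) : coroot s ∈ dualL R := by
  intro r hr
  obtain ⟨n, hn⟩ := R.crystal s hs r hr
  refine ⟨n, ?_⟩
  rw [dotR_coroot, hn, mul_div_assoc, div_self (root_pos R hs).ne', mul_one]

/-- The reflection in `r`. -/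
def rfx {l : ℕ} (r s : Fin l → ℝ) : Fin l → ℝ := s - (2 * dotR r s / dotR r r) • r

lemma rfx_neg {l : ℕ} (r s : Fin l → ℝ) : rfx r (-s) = - rfx r s := by
  simp only [rfx, dotR_eq, dotProduct_neg, mul_neg, neg_div, neg_smul]
  abel

lemma dotR_rfx {l : ℕ} {r : Fin l → ℝ} (hr : 0 < dotR r r) (s : Fin l → ℝ) :
    dotR r (rfx r s) = - dotR r s := by
  have h := hr.ne'
  simp only [rfx, dotR_eq, dotProduct_sub, dotProduct_smul, smul_eq_mul] at *
  field_simp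
  ring

lemma rfx_rfx {l : ℕ} {r : Fin l → ℝ} (hr : 0 < dotR r r) (s : Fin l → ℝ) :
    rfx r (rfx r s) = s := by
  have h := dotR_rfx hr s
  conv_lhs => rw [rfx, h]
  rw [rfx, mul_neg, neg_div, neg_smul]
  abel

lemma dotR_comm {l : ℕ} (r s : Fin l → ℝ) : dotR r s = dotR s r := dotProduct_comm _ _

lemma dotR_rfx_self {l : ℕ} {r : Fin l → ℝ} (hr : 0 < dotR r r) (s : Fin l → ℝ) :
    dotR (rfx r s) (rfx r s) = dotR s s := by
  have h := hr.ne'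
  have hc := dotR_comm s r
  simp only [rfx, dotR_eq, dotProduct_sub, sub_dotProduct, smul_dotProduct, dotProduct_smul,
    smul_eq_mul] at *
  rw [hc]
  field_simp
  ring

lemma rho_mem_dualL {l : ℕ} (R : IrreducibleRootSystem l) (P : Finset (Fin l → ℝ))
    (hP : IsPositiveSystem R P) : ∑ s ∈ P, (1 / 2 : ℝ) • coroot s ∈ dualL R := by
  classical
  obtain ⟨hsub, f, hf0, hf⟩ := hP
  intro r hr
  have hrp := root_pos R hr
  have hk : ∀ s : Fin l → ℝ, ∃ n : ℤ, s ∈ R.roots → dotR (coroot s) r = n := by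
    intro s
    by_cases hs : s ∈ R.roots
    · obtain ⟨n, hn⟩ := coroot_mem_dualL R hs r hr
      exact ⟨n, fun _ => hn⟩
    · exact ⟨0, fun h => absurd h hs⟩
  choose k hk using hk
  have hneg : ∀ s ∈ R.roots, k (-s) = - k s := by
    intro s hs
    have h1 := hk _ (neg_root R hs)
    have h2 := hk s hs
    rw [dotR_coroot] at h1 h2
    simp only [dotR_eq, neg_dotProduct, dotProduct_neg, neg_neg, mul_neg, neg_div] at h1 h2
    rw [h2] at h1
    exact_mod_cast h1.symm
  have hrfx : ∀ s ∈ R.roots, k (rfx r s) = - k s := by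
    intro s hs
    have h1 := hk (rfx r s) (R.reflect r hr s hs)
    have h2 := hk s hs
    rw [dotR_coroot, dotR_rfx_self hrp, dotR_comm, dotR_rfx hrp, dotR_comm r s, mul_neg,
      neg_div] at h1
    rw [dotR_coroot] at h2
    rw [h2] at h1
    exact_mod_cast h1.symm
  have hr2 : k r = 2 := by
    have h2 := hk r hr
    rw [dotR_coroot, mul_div_assoc, div_self hrp.ne', mul_one] at h2
    exact_mod_cast h2.symm
  have hsum : ∑ s ∈ P, ((k s : ℤ) : ZMod 2) = 0 := by
    have h2 : ∀ x : ZMod 2, x + x = 0 := by decide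
    have h3 : ∀ x : ZMod 2, x + -x = 0 := by decide
    refine Finset.sum_involution
      (fun s _ => if 0 < dotR f (rfx r s) then rfx r s else - rfx r s) ?_ ?_ ?_ ?_
    · intro s hs
      have hs' := hsub hs
      split_ifs
      · rw [hrfx s hs']; push_cast; exact h3 _
      · rw [hneg (rfx r s) (R.reflect r hr s hs'), hrfx s hs', neg_neg]
        exact h2 _
    · intro s hs hne heq
      have hs' := hsub hs
      apply hne
      split_ifs at heq
      · have h1 := hrfx s hs'
        rw [heq] at h1
        have : k s = 0 := by omega
        simp [this]
      · have h1 : s = (dotR r s / dotR r r) • r := by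
          have h4 : (2 : ℝ) • s = (2 : ℝ) • ((dotR r s / dotR r r) • r) := by
            rw [two_smul, smul_smul, ← mul_div_assoc]
            nth_rewrite 1 [← heq]
            rw [rfx]
            abel
          exact smul_right_injective _ (two_ne_zero) h4
        have h5 : (dotR r s / dotR r r) • r ∈ R.roots := h1 ▸ hs'
        rcases R.reduced r hr _ h5 with h6 | h6
        · rw [h6, one_smul] at h1
          rw [h1, hr2]; decide
        · rw [h6, neg_one_smul] at h1
          rw [h1, hneg r hr, hr2]; decide
    · intro s hs
      have hs' := hsub hs
      have hm : rfx r s ∈ R.roots := R.reflect r hr s hs'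
      split_ifs with h
      · exact (hf _ hm).2 h
      · refine (hf _ (neg_root R hm)).2 ?_
        have := hf0 _ hm
        simp only [dotR_eq, dotProduct_neg] at *
        have : f ⬝ᵥ rfx r s < 0 := lt_of_le_of_ne (not_lt.mp h) this
        linarith
    · intro s hs
      have hpos : 0 < dotR f s := (hf s (hsub hs)).1 hs
      by_cases h : 0 < dotR f (rfx r s)
      · simp only [h, if_true, rfx_rfx hrp, hpos]
      · have h7 : ¬ 0 < dotR f (-s) := by
          simp only [dotR_eq, dotProduct_neg] at *
          linarith
        simp only [h, if_false, rfx_neg, rfx_rfx hrp, h7, neg_neg]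
  have hdvd : (2 : ℤ) ∣ ∑ s ∈ P, k s := by
    rw [← Int.cast_sum] at hsum
    exact (ZMod.intCast_zmod_eq_zero_iff_dvd _ 2).mp hsum
  obtain ⟨m, hm⟩ := hdvd
  refine ⟨m, ?_⟩
  have h8 : dotR (∑ s ∈ P, (1 / 2 : ℝ) • coroot s) r = ∑ s ∈ P, (1 / 2 : ℝ) * (k s : ℝ) := by
    rw [dotR_eq, sum_dotProduct]
    refine Finset.sum_congr rfl fun s hs => ?_
    rw [smul_dotProduct, smul_eq_mul, ← dotR_eq, hk s (hsub hs)]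
  rw [h8, ← Finset.mul_sum, ← Int.cast_sum, hm]
  push_cast
  ring

/-- The theta block `Φ_R` has a non-zero Fourier coefficient of type
`f(0,ℓ)`: its `q⁰`-term is not identically zero. -/
theorem PhiR_q0_term_nonzero {l : ℕ} (R : IrreducibleRootSystem l)
    (ε : ℕ) (hε : EpsFor R ε)
    (P : Finset (Fin l → ℝ)) (hP : IsPositiveSystem R P) :
    ∃ c : ℕ → (Fin l → ℝ) → ℂ, FourierRepR R ε (PhiR P) c ∧ ∃ ℓ, c 0 ℓ ≠ 0 := by
  classical
  have hε0 : (ε : ℝ) ≠ 0 := by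
    by_cases h : RootLatticeEven R
    · rw [hε.1 h]; norm_num
    · rw [hε.2 h]; norm_num
  have hρ := rho_mem_dualL R P hP
  obtain ⟨hsub, f, hf0, hf⟩ := hP
  have hG : GRep (dualL R) f (∑ s ∈ P, (1 / 2 : ℝ) • coroot s) (PhiR P) := by
    refine GRep.prod P _ (fun r τ z => jtheta τ (dotCC (rc (coroot r)) z) / dedekindEta τ ^ 3) ?_
    intro r hr
    refine GRep.factor (coroot_mem_dualL R (hsub hr)) ?_
    have h1 := (hf r (hsub hr)).1 hr
    have h2 := root_pos R (hsub hr)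
    rw [dotR_comm, dotR_coroot, dotR_comm r f]
    positivity
  obtain ⟨ι, a, n, v, hs, hv, i₀, ha, hn, hi⟩ := hG
  have hvL : ∀ i, v i ∈ dualL R := fun i => by
    have := (dualL R).add_mem (hv i) hρ
    simpa using this
  set g : ι → ℕ × (Fin l → ℝ) := fun i => (n i, (ε : ℝ)⁻¹ • v i) with hg
  have hgv : ∀ i p, g i = p → n i = p.1 ∧ v i = (ε : ℝ) • p.2 := by
    rintro i p rfl
    refine ⟨rfl, ?_⟩
    simp only [hg, smul_smul]
    rw [mul_inv_cancel₀ hε0, one_smul]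
  refine ⟨fun m w => ∑' i : g ⁻¹' {(m, w)}, a i, ⟨?_, ?_⟩, (ε : ℝ)⁻¹ • v i₀, ?_⟩
  · intro m w hne r hr
    have : ∃ i, g i = (m, w) := by
      by_contra hno
      push Not at hno
      apply hne
      have : IsEmpty (g ⁻¹' {(m, w)}) := ⟨fun i => hno i.1 i.2⟩
      exact tsum_empty
    obtain ⟨i, hgi⟩ := this
    obtain ⟨k, hk⟩ := hvL i r hr
    refine ⟨k, ?_⟩
    rw [← hk, (hgv i _ hgi).2, dotR_eq, dotR_eq, smul_dotProduct, smul_eq_mul]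
  · intro τ hτ z
    refine ((hs τ hτ z).tsum_fiberwise g).congr_fun ?_
    rintro ⟨m, w⟩
    simp only
    rw [← tsum_mul_right]
    refine tsum_congr ?_
    rintro ⟨i, hgi⟩
    obtain ⟨h1, h2⟩ := hgv i _ hgi
    simp only [ew, h1, h2, dotCC_rc_smul]
    norm_num
  · have huniq : ∀ i, g i = (0, (ε : ℝ)⁻¹ • v i₀) → i = i₀ := by
      intro i hgi
      obtain ⟨h1, h2⟩ := hgv i _ hgi
      by_contra hne
      have h3 := hi i hne h1
      rw [h2] at h3
      simp only [smul_smul, mul_inv_cancel₀ hε0, one_smul] at h3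
      exact lt_irrefl _ h3
    have hmem : i₀ ∈ g ⁻¹' {(0, (ε : ℝ)⁻¹ • v i₀)} := by
      simp [hg, hn]
    beta_reduce
    rw [tsum_eq_single (⟨i₀, hmem⟩ : g ⁻¹' {(0, (ε : ℝ)⁻¹ • v i₀)})]
    · exact ha
    · rintro ⟨i, hgi⟩ hne
      exact absurd (Subtype.ext (huniq i hgi)) hne

end
end

section
/- Let g = J(A_1^{E8},…,A_5^{E8},B_2^{E8},…,B_6^{E8})/Φ_{E8} ∈ M_{172}(SL₂(ℤ)). Then the Fourier expansion of g is O(q^8), so g/Δ^8 ∈ M_{76}(SL₂(ℤ)); consequently g = Δ^8·E_4·h for some modular form h of weight 72 on SL₂(ℤ), where Δ = η^{24} and E_4 is the Eisenstein series of weight 4. -/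
open Complex Matrix

noncomputable section

/-- The Gram matrix of the root lattice `E_8` (in a basis of simple roots: a chain
of nodes 0–6 with node 7 attached to node 4). -/
def E8Gram : Matrix (Fin 8) (Fin 8) ℤ :=
  !![2,-1,0,0,0,0,0,0;
     -1,2,-1,0,0,0,0,0;
     0,-1,2,-1,0,0,0,0;
     0,0,-1,2,-1,0,0,0;
     0,0,0,-1,2,-1,0,-1;
     0,0,0,0,-1,2,-1,0;
     0,0,0,0,0,-1,2,0;
     0,0,0,0,-1,0,0,2]

/-- The integral bilinear form of the `E_8` lattice. -/
def pairE8 (v w : Fin 8 → ℤ) : ℤ := ∑ i, ∑ j, v i * E8Gram i j * w j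

/-- The Weyl group `W(E_8)`: the group of lattice automorphisms generated by the
reflections in the 240 roots of `E_8` (the vectors of norm 2), realized as a set of
integral matrices.  (Each reflection is an involution, so the closure as a monoid is
already a group.) -/
def weylE8 : Set (Matrix (Fin 8) (Fin 8) ℤ) :=
  (Submonoid.closure {S : Matrix (Fin 8) (Fin 8) ℤ |
    ∃ r : Fin 8 → ℤ, pairE8 r r = 2 ∧
      ∀ v : Fin 8 → ℤ, S.mulVec v = fun i => v i - pairE8 r v * r i} :
    Submonoid (Matrix (Fin 8) (Fin 8) ℤ))

/-- The theta block `Φ_{E_8}(τ,𝔷) = ∏_{r > 0} ϑ(τ,(r,𝔷))/η(τ)^3`, the product ranging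
over the 120 positive roots of `E_8` (the norm 2 vectors with non-negative coordinates
in the basis of simple roots). -/
def PhiE8 (τ : ℂ) (z : Fin 8 → ℂ) : ℂ :=
  ∏ᶠ (r : Fin 8 → ℤ) (_ : pairE8 r r = 2 ∧ ∀ i, 0 ≤ r i),
    (jtheta τ (pairC E8Gram (zc r) z) / dedekindEta τ ^ 3)

/-- The weights of Sakai's forms `A₁,...,A₅,B₂,...,B₆`. -/
def sakaiWt : Fin 9 → ℤ := ![4, 4, 4, 4, 4, 6, 6, 6, 6]

/-- The indices of Sakai's forms `A₁,...,A₅,B₂,...,B₆`. -/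
def sakaiIdx : Fin 9 → ℕ := ![1, 2, 3, 4, 5, 2, 3, 4, 6]

/-- The normalized Eisenstein series `E₄(τ) = 1 + 240 ∑_{n≥1} σ₃(n) qⁿ`. -/
def E4 (τ : ℂ) : ℂ :=
  1 + 240 * ∑' n : ℕ, ((ArithmeticFunction.sigma 3 (n + 1) : ℕ) : ℂ) *
    Complex.exp (2 * (Real.pi : ℂ) * Complex.I * ((n : ℂ) + 1) * τ)

section PartA

open UpperHalfPlane ModularForm ModularFormClass MatrixGroups EisensteinSeries
open scoped Manifold

theorem aux_qpow (n : ℕ) (τ : ℂ) :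
    Function.Periodic.qParam 1 τ ^ n =
      Complex.exp (2 * (Real.pi : ℂ) * Complex.I * (n : ℂ) * τ) := by
  rw [Function.Periodic.qParam, ← Complex.exp_nat_mul]
  congr 1
  push_cast
  ring

theorem aux_toModular {k : ℤ} {f : ℂ → ℂ} (hf : IsModularForm k f) :
    ∃ F : ModularForm 𝒮ℒ k, ∀ τ : ℍ, F τ = f τ := by
  obtain ⟨hd, ht, cf, hs⟩ := hf
  have hslash : ∀ γ : SL(2, ℤ), (fun τ : ℍ => f τ) ∣[k] γ = fun τ : ℍ => f τ := by
    intro γ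
    ext τ
    rw [ModularForm.SL_slash_apply]
    have hdet : γ 0 0 * γ 1 1 - γ 0 1 * γ 1 0 = 1 := by
      have := γ.det_coe
      rwa [Matrix.det_fin_two] at this
    have h := ht (γ 0 0) (γ 0 1) (γ 1 0) (γ 1 1) hdet τ τ.im_pos
    have hden : UpperHalfPlane.denom γ τ = ((γ 1 0 : ℤ) : ℂ) * τ + ((γ 1 1 : ℤ) : ℂ) := by
      simp [UpperHalfPlane.denom]
    have hsm : ((γ • τ : ℍ) : ℂ) = (((γ 0 0 : ℤ) : ℂ) * τ + ((γ 0 1 : ℤ) : ℂ)) /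
        (((γ 1 0 : ℤ) : ℂ) * τ + ((γ 1 1 : ℤ) : ℂ)) := by
      rw [UpperHalfPlane.specialLinearGroup_apply]
      simp
    have hne : ((γ 1 0 : ℤ) : ℂ) * τ + ((γ 1 1 : ℤ) : ℂ) ≠ 0 := by
      rw [← hden]; exact UpperHalfPlane.denom_ne_zero _ _
    rw [hsm, h, hden, mul_comm, ← mul_assoc, ← zpow_add₀ hne]
    simp
  refine ⟨{ toFun := fun τ => f τ
            slash_action_eq' := fun _ ⟨γ, hγ⟩ ↦ hγ ▸ hslash γ
            holo' := ?_
            bdd_at_cusps' := ?_ }, fun τ => rfl⟩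
  · show MDiff (fun τ : ℍ => f τ)
    rw [UpperHalfPlane.mdifferentiable_iff]
    refine hd.congr ?_
    intro z hz
    simp [UpperHalfPlane.ofComplex_apply_of_im_pos hz]
  · intro c hc
    rw [Subgroup.IsArithmetic.isCusp_iff_isCusp_SL2Z] at hc
    rw [OnePoint.isBoundedAt_iff_forall_SL2Z hc]
    intro γ _
    show IsBoundedAtImInfty ((fun τ : ℍ => f τ) ∣[k] γ)
    rw [hslash γ]
    refine isBoundedAtImInfty_of_hasSum_qExpansion (h := 1) (c := cf) one_pos fun τ => ?_
    simpa only [aux_qpow, smul_eq_mul] using hs τ τ.im_pos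

theorem aux_ofModular {k : ℤ} {f : ℂ → ℂ} (F : ModularForm 𝒮ℒ k) (hF : ∀ τ : ℍ, f τ = F τ) :
    IsModularForm k f ∧ ∀ τ : ℂ, 0 < τ.im →
    HasSum (fun n : ℕ => (qExpansion 1 F).coeff n *
      Complex.exp (2 * (Real.pi : ℂ) * Complex.I * (n : ℂ) * τ)) (f τ) := by
  have hsum : ∀ τ : ℂ, 0 < τ.im →
    HasSum (fun n : ℕ => (qExpansion 1 F).coeff n *
      Complex.exp (2 * (Real.pi : ℂ) * Complex.I * (n : ℂ) * τ)) (f τ) := by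
    intro τ hτ
    have : HasSum _ (F ⟨τ, hτ⟩) :=
      ModularForm.hasSum_qExpansion F one_pos one_mem_strictPeriods_SL ⟨τ, hτ⟩
    rw [← hF] at this
    simpa only [aux_qpow, smul_eq_mul] using this
  refine ⟨⟨?_, ?_, _, hsum⟩, hsum⟩
  · have := UpperHalfPlane.mdifferentiable_iff.mp F.holo'
    refine this.congr ?_
    intro z hz
    simp only [Function.comp]
    rw [UpperHalfPlane.ofComplex_apply_of_im_pos hz]
    exact hF ⟨z, hz⟩
  · intro a b c d h τ hτ
    let γ : SL(2, ℤ) := ⟨!![a, b; c, d], by rw [Matrix.det_fin_two]; simpa using h⟩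
    let τ' : ℍ := ⟨τ, hτ⟩
    have h2 : F (γ • τ') = (UpperHalfPlane.denom γ τ') ^ k * F τ' := by
      have h3 := congrFun (SlashInvariantForm.slash_action_eqn F (γ : GL (Fin 2) ℝ) ⟨γ, rfl⟩) τ'
      rw [← ModularForm.SL_slash, ModularForm.SL_slash_apply] at h3
      rw [← h3, mul_comm, mul_assoc, ← zpow_add₀ (UpperHalfPlane.denom_ne_zero _ _)]
      simp
    have hden : UpperHalfPlane.denom γ τ' = (c : ℂ) * τ + (d : ℂ) := by
      have : ∀ γ : SL(2, ℤ), UpperHalfPlane.denom γ τ' =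
          ((γ 1 0 : ℤ) : ℂ) * τ' + ((γ 1 1 : ℤ) : ℂ) := by
        intro γ; simp [UpperHalfPlane.denom]
      rw [this]; rfl
    have hsm : ((γ • τ' : ℍ) : ℂ) = ((a : ℂ) * τ + (b : ℂ)) /
        ((c : ℂ) * τ + (d : ℂ)) := by
      rw [UpperHalfPlane.specialLinearGroup_apply]
      simp [γ, τ']
    rw [← hF, ← hF, hsm, hden] at h2
    exact h2

theorem aux_eta (τ : ℂ) : dedekindEta τ = ModularForm.eta τ := by
  rw [dedekindEta, ModularForm.eta]
  simp only [ModularForm.eta_q_eq_cexp, Function.Periodic.qParam]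
  congr 2
  push_cast
  ring

theorem aux_eta_ne {τ : ℂ} (hτ : 0 < τ.im) : dedekindEta τ ≠ 0 := by
  rw [aux_eta]; exact ModularForm.eta_ne_zero hτ

theorem aux_disc (τ : ℍ) : ModularForm.discriminant τ = dedekindEta τ ^ 24 := by
  rw [aux_eta]; rfl

theorem aux_E4 (τ : ℍ) : E₄ τ = E4 τ := by
  have h := q_expansion_bernoulli (by norm_num : 3 ≤ 4) ⟨2, rfl⟩ τ
  have hb : bernoulli 4 = -1/30 := by
    rw [bernoulli_eq_bernoulli'_of_ne_one (by norm_num), bernoulli'_four]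
  rw [h, E4, hb]
  simp_rw [zpow_natCast]
  rw [tsum_pnat_eq_tsum_succ
    (f := fun n ↦ (ArithmeticFunction.sigma (4-1) n : ℂ) * cexp (2 * Real.pi * Complex.I * τ) ^ n)]
  have : ∀ n : ℕ, cexp (2 * Real.pi * Complex.I * τ) ^ (n+1) =
      cexp (2 * (Real.pi : ℂ) * Complex.I * ((n : ℂ) + 1) * τ) := by
    intro n
    rw [← Complex.exp_nat_mul]; congr 1; push_cast; ring
  simp_rw [this]
  push_cast
  norm_num

theorem aux_divDelta (N : ℕ) : ∀ {k : ℤ} (F : ModularForm 𝒮ℒ k),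
    (∀ n < N, (qExpansion 1 F).coeff n = 0) →
    ∃ G : ModularForm 𝒮ℒ (k - 12 * N), ∀ τ, F τ = ModularForm.discriminant τ ^ N * G τ := by
  induction N with
  | zero =>
    intro k F _
    exact ⟨ModularForm.mcast (by simp) F, fun τ => by simp [ModularForm.coe_mcast]⟩
  | succ N ih =>
    intro k F hF
    have h0 := hF 0 (Nat.succ_pos _)
    have hq := qExpansion_eq_qExpansion_discriminant_mul F h0
    set G := CuspForm.discriminantEquiv (toCuspForm F h0) with hG
    obtain ⟨H, hH⟩ := ih G (by
      intro n hn
      have ho : ((N + 1 : ℕ) : ℕ∞) ≤ (qExpansion 1 F).order :=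
        PowerSeries.nat_le_order _ _ (fun i hi => hF i hi)
      rw [hq, PowerSeries.order_mul, discriminant_qExpansion_order] at ho
      apply PowerSeries.coeff_of_lt_order
      refine lt_of_lt_of_le (b := (N : ℕ∞)) (by exact_mod_cast hn) ?_
      rw [Nat.cast_add, add_comm, Nat.cast_one] at ho
      exact (ENat.add_le_add_iff_left (by simp)).mp ho)
    refine ⟨ModularForm.mcast (by push_cast; ring) H, fun τ => ?_⟩
    rw [ModularForm.coe_mcast, pow_succ', mul_assoc, ← hH]
    have := discriminant_mul_discriminantEquiv_apply (toCuspForm F h0) τ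
    rw [← hG, toCuspForm_apply] at this
    exact this.symm

theorem aux_divE4 (N : ℕ) : ∀ (F : ModularForm 𝒮ℒ (12 * N + 4)),
    ∃ H : ModularForm 𝒮ℒ (12 * N), ∀ τ, F τ = E₄ τ * H τ := by
  induction N with
  | zero =>
    intro F
    set c := (qExpansion 1 F).coeff 0 with hc
    set G : ModularForm 𝒮ℒ (12 * (0 : ℕ) + 4) := F - c • ModularForm.mcast (by simp) E₄ with hG
    have h0 : (qExpansion 1 G).coeff 0 = 0 := by
      rw [hG, FunLike.coe_sub, ModularForm.qExpansion_sub one_pos one_mem_strictPeriods_SL,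
        FunLike.coe_smul, ModularForm.qExpansion_smul one_pos one_mem_strictPeriods_SL, map_sub,
        PowerSeries.coeff_smul, ModularForm.coe_mcast, E_qExpansion_coeff_zero _ ⟨2, rfl⟩]
      simp [hc]
    have hz := levelOne_neg_weight_eq_zero (by norm_num) (CuspForm.discriminantEquiv (toCuspForm G h0))
    refine ⟨ModularForm.mcast (by simp) (ModularForm.const c), fun τ => ?_⟩
    have := discriminant_mul_discriminantEquiv_apply (toCuspForm G h0) τ
    rw [hz, toCuspForm_apply] at this
    simp [hG, ModularForm.coe_mcast] at this ⊢
    linear_combination -this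
  | succ N ih =>
    intro F
    set c := (qExpansion 1 F).coeff 0 with hc
    set P : ModularForm 𝒮ℒ (12 * ((N + 1 : ℕ) : ℤ) + 4) :=
      ModularForm.mcast (by push_cast; ring) (E₄.pow (3 * N + 4)) with hP
    have hP0 : (qExpansion 1 P).coeff 0 = 1 := by
      rw [hP, ModularForm.coe_mcast, ModularForm.qExpansion_pow one_pos one_mem_strictPeriods_SL]
      have := E_qExpansion_coeff_zero (by norm_num : 3 ≤ 4) ⟨2, rfl⟩
      simp only [PowerSeries.coeff_zero_eq_constantCoeff, map_pow] at this ⊢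
      rw [this, one_pow]
    set G : ModularForm 𝒮ℒ (12 * ((N + 1 : ℕ) : ℤ) + 4) := F - c • P with hG
    have h0 : (qExpansion 1 G).coeff 0 = 0 := by
      rw [hG, FunLike.coe_sub, ModularForm.qExpansion_sub one_pos one_mem_strictPeriods_SL,
        FunLike.coe_smul, ModularForm.qExpansion_smul one_pos one_mem_strictPeriods_SL, map_sub,
        PowerSeries.coeff_smul, hP0]
      simp [hc]
    obtain ⟨H, hH⟩ := ih (ModularForm.mcast (by push_cast; ring)
      (CuspForm.discriminantEquiv (toCuspForm G h0)))
    refine ⟨c • ModularForm.mcast (by push_cast; ring) (E₄.pow (3 * N + 3)) +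
      ModularForm.mcast (by push_cast; ring)
        (ModularForm.mul (CuspForm.discriminant : ModularForm 𝒮ℒ 12) H), fun τ => ?_⟩
    have := discriminant_mul_discriminantEquiv_apply (toCuspForm G h0) τ
    have h4 := hH τ
    rw [ModularForm.coe_mcast] at h4
    rw [h4, toCuspForm_apply] at this
    simp [hG, hP, ModularForm.coe_mcast] at this ⊢
    have e1 : (E₄.pow (3 * N + 4)) τ = E₄ τ ^ (3 * N + 4) := 
      congrFun (ModularForm.coe_pow E₄ _) τ
    have e2 : (E₄.pow (3 * N + 3)) τ = E₄ τ ^ (3 * N + 3) := 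
      congrFun (ModularForm.coe_pow E₄ _) τ
    rw [e1] at this
    rw [e2]
    linear_combination -this

theorem aux_final (g : ℂ → ℂ) (hg : IsModularForm 172 g)
    (hO : ∀ cf : ℕ → ℂ, (∀ τ : ℂ, 0 < τ.im →
      HasSum (fun n : ℕ => cf n * Complex.exp (2 * (Real.pi : ℂ) * Complex.I * (n : ℂ) * τ))
          (g τ)) → ∀ n < 8, cf n = 0) :
    (∃ cf : ℕ → ℂ,
      (∀ τ : ℂ, 0 < τ.im →
        HasSum (fun n : ℕ => cf n * Complex.exp (2 * (Real.pi : ℂ) * Complex.I * (n : ℂ) * τ))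
          (g τ)) ∧
      ∀ n < 8, cf n = 0) ∧
    IsModularForm 76 (fun τ => g τ / dedekindEta τ ^ 192) ∧
    ∃ h : ℂ → ℂ, IsModularForm 72 h ∧
      ∀ τ : ℂ, 0 < τ.im → g τ = dedekindEta τ ^ 192 * E4 τ * h τ := by
  obtain ⟨F, hF⟩ := aux_toModular hg
  have hs := (aux_ofModular F (fun τ => (hF τ).symm)).2
  have h0 := hO _ hs
  obtain ⟨G, hG⟩ := aux_divDelta 8 F h0
  have hG' : ∀ τ : ℍ, g τ = dedekindEta τ ^ 192 * G τ := by
    intro τ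
    rw [← hF, hG, aux_disc, ← pow_mul]
  have hne : ∀ τ : ℍ, dedekindEta τ ^ 192 ≠ 0 := fun τ => pow_ne_zero _ (aux_eta_ne τ.im_pos)
  let G' : ModularForm 𝒮ℒ 76 := ModularForm.mcast (by norm_num) G
  have hG76 : ∀ τ : ℍ, g τ / dedekindEta τ ^ 192 = G' τ := by
    intro τ
    rw [hG', mul_div_cancel_left₀ _ (hne τ)]
    rfl
  obtain ⟨H, hH⟩ := aux_divE4 6 (ModularForm.mcast (by norm_num) G)
  let H' : ModularForm 𝒮ℒ 72 := ModularForm.mcast (by norm_num) H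
  refine ⟨⟨_, hs, h0⟩, (aux_ofModular G' hG76).1, fun τ => H' (UpperHalfPlane.ofComplex τ),
    (aux_ofModular H' (fun τ => by simp)).1, ?_⟩
  intro τ hτ
  have h1 := hH ⟨τ, hτ⟩
  rw [ModularForm.coe_mcast, aux_E4] at h1
  have h2 := hG' ⟨τ, hτ⟩
  rw [h1, ← mul_assoc] at h2
  beta_reduce
  rw [UpperHalfPlane.ofComplex_apply_of_im_pos hτ]
  exact h2

end PartA
theorem aux_pair_expand (r : Fin 8 → ℤ) : pairE8 r r =
    2 * (r 0 ^ 2 + r 1 ^ 2 + r 2 ^ 2 + r 3 ^ 2 + r 4 ^ 2 + r 5 ^ 2 + r 6 ^ 2 + r 7 ^ 2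
      - r 0 * r 1 - r 1 * r 2 - r 2 * r 3 - r 3 * r 4 - r 4 * r 5 - r 5 * r 6 - r 4 * r 7) := by
  simp [pairE8, E8Gram, Fin.sum_univ_eight]
  ring

theorem aux_root_bound (r : Fin 8 → ℤ) (h : pairE8 r r = 2) : ∀ i, r i ^ 2 ≤ 60 := by
  rw [aux_pair_expand] at h
  intro i
  fin_cases i
  · show r 0 ^ 2 ≤ 60
    nlinarith only [h, sq_nonneg (2 * r 6 - 1 * r 5), sq_nonneg (3 * r 5 - 2 * r 4), sq_nonneg (2 * r 7 - 1 * r 4), sq_nonneg (5 * r 4 - 6 * r 3),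
      sq_nonneg (4 * r 3 - 5 * r 2), sq_nonneg (3 * r 2 - 4 * r 1), sq_nonneg (2 * r 1 - 3 * r 0), sq_nonneg (r 0)]
  · show r 1 ^ 2 ≤ 60
    nlinarith only [h, sq_nonneg (2 * r 0 - 1 * r 1), sq_nonneg (2 * r 6 - 1 * r 5), sq_nonneg (3 * r 5 - 2 * r 4), sq_nonneg (2 * r 7 - 1 * r 4),
      sq_nonneg (5 * r 4 - 6 * r 3), sq_nonneg (4 * r 3 - 5 * r 2), sq_nonneg (3 * r 2 - 4 * r 1), sq_nonneg (r 1)]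
  · show r 2 ^ 2 ≤ 60
    nlinarith only [h, sq_nonneg (2 * r 0 - 1 * r 1), sq_nonneg (3 * r 1 - 2 * r 2), sq_nonneg (2 * r 6 - 1 * r 5), sq_nonneg (3 * r 5 - 2 * r 4),
      sq_nonneg (2 * r 7 - 1 * r 4), sq_nonneg (5 * r 4 - 6 * r 3), sq_nonneg (4 * r 3 - 5 * r 2), sq_nonneg (r 2)]
  · show r 3 ^ 2 ≤ 60
    nlinarith only [h, sq_nonneg (2 * r 0 - 1 * r 1), sq_nonneg (3 * r 1 - 2 * r 2), sq_nonneg (4 * r 2 - 3 * r 3), sq_nonneg (2 * r 6 - 1 * r 5),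
      sq_nonneg (3 * r 5 - 2 * r 4), sq_nonneg (2 * r 7 - 1 * r 4), sq_nonneg (5 * r 4 - 6 * r 3), sq_nonneg (r 3)]
  · show r 4 ^ 2 ≤ 60
    nlinarith only [h, sq_nonneg (2 * r 0 - 1 * r 1), sq_nonneg (3 * r 1 - 2 * r 2), sq_nonneg (4 * r 2 - 3 * r 3), sq_nonneg (5 * r 3 - 4 * r 4),
      sq_nonneg (2 * r 6 - 1 * r 5), sq_nonneg (3 * r 5 - 2 * r 4), sq_nonneg (2 * r 7 - 1 * r 4), sq_nonneg (r 4)]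
  · show r 5 ^ 2 ≤ 60
    nlinarith only [h, sq_nonneg (2 * r 0 - 1 * r 1), sq_nonneg (3 * r 1 - 2 * r 2), sq_nonneg (4 * r 2 - 3 * r 3), sq_nonneg (5 * r 3 - 4 * r 4),
      sq_nonneg (2 * r 7 - 1 * r 4), sq_nonneg (7 * r 4 - 10 * r 5), sq_nonneg (2 * r 6 - 1 * r 5), sq_nonneg (r 5)]
  · show r 6 ^ 2 ≤ 60
    nlinarith only [h, sq_nonneg (2 * r 0 - 1 * r 1), sq_nonneg (3 * r 1 - 2 * r 2), sq_nonneg (4 * r 2 - 3 * r 3), sq_nonneg (5 * r 3 - 4 * r 4),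
      sq_nonneg (2 * r 7 - 1 * r 4), sq_nonneg (7 * r 4 - 10 * r 5), sq_nonneg (4 * r 5 - 7 * r 6), sq_nonneg (r 6)]
  · show r 7 ^ 2 ≤ 60
    nlinarith only [h, sq_nonneg (2 * r 0 - 1 * r 1), sq_nonneg (3 * r 1 - 2 * r 2), sq_nonneg (4 * r 2 - 3 * r 3), sq_nonneg (5 * r 3 - 4 * r 4),
      sq_nonneg (2 * r 6 - 1 * r 5), sq_nonneg (3 * r 5 - 2 * r 4), sq_nonneg (8 * r 4 - 15 * r 7), sq_nonneg (r 7)]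

theorem aux_roots_finite : {r : Fin 8 → ℤ | pairE8 r r = 2 ∧ ∀ i, 0 ≤ r i}.Finite := by
  refine (Set.Finite.pi' (fun _ : Fin 8 => Set.finite_Icc (0 : ℤ) 60)).subset ?_
  rintro r ⟨h, h0⟩ i
  exact ⟨h0 i, by nlinarith [aux_root_bound r h i, h0 i]⟩
section PartB

open Filter Topology

/-- The point `ρ` (times `i`) where the theta block is evaluated. -/
def auxZ0 : Fin 8 → ℂ := fun i => Complex.I * (![29, 57, 84, 110, 135, 91, 46, 68] i : ℂ)

theorem aux_pair_z0 (r : Fin 8 → ℤ) :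
    pairC E8Gram (zc r) auxZ0 = Complex.I * ((∑ i, r i : ℤ) : ℂ) := by
  simp [pairC, E8Gram, zc, auxZ0, Fin.sum_univ_eight]
  ring

theorem aux_root_height (r : Fin 8 → ℤ) (h : pairE8 r r = 2) (h0 : ∀ i, 0 ≤ r i) :
    0 < ∑ i, r i := by
  rcases (Finset.sum_nonneg (fun i _ => h0 i) : 0 ≤ ∑ i, r i).lt_or_eq with h1 | h1
  · exact h1
  · have h2 := (Finset.sum_eq_zero_iff_of_nonneg (fun i _ => h0 i)).mp h1.symm
    have h3 : r = 0 := funext fun i => h2 i (Finset.mem_univ i)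
    subst h3
    simp [pairE8] at h

theorem aux_exp_norm (n : ℕ) (y : ℝ) :
    ‖Complex.exp (2 * (Real.pi : ℂ) * Complex.I * ((n : ℂ) + 1) * ((y : ℂ) * Complex.I))‖ =
      Real.exp (-(2 * Real.pi * y)) ^ (n + 1) := by
  rw [Complex.norm_exp, ← Real.exp_nat_mul]
  congr 1
  simp
  ring

theorem aux_exp_lt (y : ℝ) (hy : 0 < y) : Real.exp (-(2 * Real.pi * y)) < 1 := by
  rw [Real.exp_lt_one_iff]
  have := Real.pi_pos
  simp only [Left.neg_neg_iff]
  positivity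

theorem aux_mult (ζ : ℂ) (y : ℝ) (hy : 0 < y) : Multipliable fun n : ℕ =>
    (1 - Complex.exp (2 * (Real.pi : ℂ) * Complex.I * ((n : ℂ) + 1) * ((y : ℂ) * Complex.I)) * ζ) := by
  simp only [sub_eq_add_neg]
  apply multipliable_one_add_of_summable
  simp only [norm_neg, norm_mul, aux_exp_norm]
  exact ((summable_nat_add_iff 1).mpr
    (summable_geometric_of_lt_one (Real.exp_nonneg _) (aux_exp_lt y hy))).mul_right _

theorem aux_exp_tendsto :
    Tendsto (fun y : ℝ => Real.exp (-(2 * Real.pi * y))) atTop (𝓝 0) := by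
  apply Real.tendsto_exp_neg_atTop_nhds_zero.comp
  exact tendsto_id.const_mul_atTop (by positivity)

theorem aux_prod_tendsto (ζ : ℂ) : Tendsto (fun y : ℝ => ∏' n : ℕ,
    (1 - Complex.exp (2 * (Real.pi : ℂ) * Complex.I * ((n : ℂ) + 1) * ((y : ℂ) * Complex.I)) * ζ))
    atTop (𝓝 1) := by
  simp only [sub_eq_add_neg]
  have := tendsto_tprod_one_add_of_dominated_convergence (𝓕 := (atTop : Filter ℝ))
    (g := (0 : ℕ → ℂ))
    (f := fun (y : ℝ) (n : ℕ) => -(Complex.exp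
      (2 * (Real.pi : ℂ) * Complex.I * ((n : ℂ) + 1) * ((y : ℂ) * Complex.I)) * ζ))
    (bound := fun n => Real.exp (-(2 * Real.pi * 1)) ^ (n + 1) * ‖ζ‖)
    (((summable_nat_add_iff 1).mpr
    (summable_geometric_of_lt_one (Real.exp_nonneg _) (aux_exp_lt 1 one_pos))).mul_right _)
    ?_ ?_
  · simpa using this
  · intro n
    rw [Pi.zero_apply, tendsto_zero_iff_norm_tendsto_zero]
    simp only [norm_neg, norm_mul, aux_exp_norm]
    simpa using (aux_exp_tendsto.pow (n + 1)).mul_const ‖ζ‖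
  · filter_upwards [eventually_ge_atTop 1] with y hy n
    simp only [norm_neg, norm_mul, aux_exp_norm]
    gcongr

theorem aux_factor (N : ℤ) (hN : 0 < N) : ∃ L : ℂ, L ≠ 0 ∧
    Tendsto (fun y : ℝ => jtheta ((y : ℂ) * Complex.I) (Complex.I * (N : ℂ)) /
      dedekindEta ((y : ℂ) * Complex.I) ^ 3) atTop (𝓝 L) := by
  refine ⟨Complex.exp ((Real.pi : ℂ) * Complex.I * (Complex.I * (N : ℂ))) -
      Complex.exp (-((Real.pi : ℂ) * Complex.I * (Complex.I * (N : ℂ)))), ?_, ?_⟩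
  · have e : (Real.pi : ℂ) * Complex.I * (Complex.I * (N : ℂ)) = ((-(Real.pi * N) : ℝ) : ℂ) := by
      push_cast
      linear_combination (Real.pi * N : ℂ) * Complex.I_mul_I
    rw [e, ← Complex.ofReal_neg, ← Complex.ofReal_exp, ← Complex.ofReal_exp, sub_ne_zero]
    intro h
    have h1 := Real.exp_injective (Complex.ofReal_injective h)
    have h2 : 0 < Real.pi * N := mul_pos Real.pi_pos (by exact_mod_cast hN)
    linarith
  · set s := Complex.exp ((Real.pi : ℂ) * Complex.I * (Complex.I * (N : ℂ))) -
      Complex.exp (-((Real.pi : ℂ) * Complex.I * (Complex.I * (N : ℂ)))) with hs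
    set ζ := Complex.exp (2 * (Real.pi : ℂ) * Complex.I * (Complex.I * (N : ℂ))) with hζ
    set ζ' := Complex.exp (-(2 * (Real.pi : ℂ) * Complex.I * (Complex.I * (N : ℂ)))) with hζ'
    have key := ((((aux_prod_tendsto ζ).mul (aux_prod_tendsto ζ')).mul
      (aux_prod_tendsto 1)).div ((aux_prod_tendsto 1).pow 3) (by simp)).const_mul s
    simp only [mul_one, one_pow, div_one] at key
    refine key.congr' ?_
    filter_upwards [eventually_gt_atTop 0] with y hy
    rw [jtheta, dedekindEta, ← hs, ← hζ, ← hζ']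
    have m1 := aux_mult ζ y hy
    have m2 := aux_mult ζ' y hy
    have m3 := aux_mult 1 y hy
    simp only [mul_one] at m3
    rw [(m1.mul m2).tprod_mul m3, m1.tprod_mul m2, mul_pow, ← Complex.exp_nat_mul]
    have e : ((3 : ℕ) : ℂ) * ((Real.pi : ℂ) * Complex.I * ((y : ℂ) * Complex.I) / 12) =
      (Real.pi : ℂ) * Complex.I * ((y : ℂ) * Complex.I) / 4 := by push_cast; ring
    rw [e]
    simp only [Pi.div_apply]
    rw [mul_assoc (Complex.exp ((Real.pi : ℂ) * Complex.I * ((y : ℂ) * Complex.I) / 4)) s _,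
      mul_div_mul_left _ _ (Complex.exp_ne_zero _)]
    ring

theorem aux_Phi : ∃ L : ℂ, L ≠ 0 ∧
    Tendsto (fun y : ℝ => PhiE8 ((y : ℂ) * Complex.I) auxZ0) atTop (𝓝 L) := by
  have hex : ∀ r : Fin 8 → ℤ, ∃ L : ℂ, (pairE8 r r = 2 ∧ ∀ i, 0 ≤ r i) → L ≠ 0 ∧
    Tendsto (fun y : ℝ => jtheta ((y : ℂ) * Complex.I) (pairC E8Gram (zc r) auxZ0) /
      dedekindEta ((y : ℂ) * Complex.I) ^ 3) atTop (𝓝 L) := by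
    intro r
    by_cases h : pairE8 r r = 2 ∧ ∀ i, 0 ≤ r i
    · obtain ⟨L, hL⟩ := aux_factor (∑ i, r i) (aux_root_height r h.1 h.2)
      refine ⟨L, fun _ => ?_⟩
      rw [aux_pair_z0]
      exact hL
    · exact ⟨0, fun h' => absurd h' h⟩
  choose L hL using hex
  refine ⟨∏ r ∈ aux_roots_finite.toFinset, L r, ?_, ?_⟩
  · rw [Finset.prod_ne_zero_iff]
    intro r hr
    exact (hL r (by simpa using hr)).1
  · have hP : ∀ y : ℝ, PhiE8 ((y : ℂ) * Complex.I) auxZ0 = ∏ r ∈ aux_roots_finite.toFinset,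
        (jtheta ((y : ℂ) * Complex.I) (pairC E8Gram (zc r) auxZ0) /
          dedekindEta ((y : ℂ) * Complex.I) ^ 3) := by
      intro y
      exact finprod_mem_eq_finite_toFinset_prod _ aux_roots_finite
    simp_rw [hP]
    exact tendsto_finsetProd _ fun r hr => (hL r (by simpa using hr)).2

end PartB

section PartC

open Filter Topology

theorem aux_norm_exp (x : ℂ) :
    ‖Complex.exp (2 * (Real.pi : ℂ) * Complex.I * x)‖ = Real.exp (-(2 * Real.pi * x.im)) := by
  rw [Complex.norm_exp]
  congr 1
  simp [Complex.mul_re, Complex.mul_im]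

theorem aux_pair_update {l : ℕ} (M : Matrix (Fin l) (Fin l) ℤ) (v : Fin l → ℚ)
    (z : Fin l → ℂ) (i : Fin l) : ∃ a : ℝ, ∀ u : ℂ,
    pairC M (qc v) (Function.update z i (z i + u)) = pairC M (qc v) z + (a : ℂ) * u := by
  refine ⟨∑ k, (v k : ℝ) * (M k i : ℝ), fun u => ?_⟩
  have h : Function.update z i (z i + u) = fun j => z j + (if j = i then u else 0) := by
    funext j
    by_cases hj : j = i
    · subst hj; simp
    · simp [hj]
  rw [h]
  simp only [pairC, qc, mul_add, Finset.sum_add_distrib]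
  congr 1
  push_cast
  rw [Finset.sum_mul]
  refine Finset.sum_congr rfl fun k _ => ?_
  simp

theorem aux_fourier_bound {l : ℕ} (M : Matrix (Fin l) (Fin l) ℤ) (φ : ℂ → (Fin l → ℂ) → ℂ)
    (c : ℕ → (Fin l → ℚ) → ℂ) (hc : FourierRep M φ c)
    (h0 : ∀ ℓ : Fin l → ℚ, c 0 ℓ = if ℓ = 0 then 1 else 0) (z : Fin l → ℂ) (i : Fin l) :
    ∃ C : ℝ, 0 ≤ C ∧ ∀ y : ℝ, 1 ≤ y → ∀ u : ℂ, ‖u‖ ≤ 1 →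
      ‖φ ((y : ℂ) * Complex.I) (Function.update z i (z i + u)) - 1‖ ≤
        C * Real.exp (-(2 * Real.pi * y)) := by
  obtain ⟨-, hs⟩ := hc
  have s1 := (hs Complex.I (by simp) (Function.update z i (z i + Complex.I))).summable.norm
  have s2 := (hs Complex.I (by simp) (Function.update z i (z i + -Complex.I))).summable.norm
  obtain ⟨S, s3⟩ := s1.add s2
  have hS0 : 0 ≤ S := s3.nonneg fun p => add_nonneg (norm_nonneg _) (norm_nonneg _)
  refine ⟨Real.exp (2 * Real.pi) * S, mul_nonneg (Real.exp_pos _).le hS0, fun y hy u hu => ?_⟩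
  · have hS := hs ((y : ℂ) * Complex.I) (by simp; linarith) (Function.update z i (z i + u))
    have hS' := hS.sub (hasSum_ite_eq ((0 : ℕ), (0 : Fin l → ℚ)) (1 : ℂ))
    have e : Real.exp (2 * Real.pi) * S * Real.exp (-(2 * Real.pi * y)) =
        Real.exp (2 * Real.pi) * Real.exp (-(2 * Real.pi * y)) * S := by ring
    rw [e, ← hS'.tsum_eq]
    refine tsum_of_norm_bounded (s3.mul_left _) ?_
    rintro ⟨n, ℓ⟩
    rcases Nat.eq_zero_or_pos n with hn | hn
    · subst hn
      have : c 0 ℓ * Complex.exp (2 * (Real.pi : ℂ) * Complex.I * (((0 : ℕ) : ℂ) *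
          ((y : ℂ) * Complex.I) + pairC M (qc ℓ) (Function.update z i (z i + u)))) -
          (if ((0 : ℕ), ℓ) = (0, 0) then (1 : ℂ) else 0) = 0 := by
        rw [h0]
        by_cases hl : ℓ = 0
        · subst hl
          simp [pairC, qc]
        · simp [hl]
      simp only
      rw [this, norm_zero]
      positivity
    · have hne : ¬ ((n, ℓ) = ((0 : ℕ), (0 : Fin l → ℚ))) := by
        intro h
        have := congrArg Prod.fst h
        simp only at this
        omega
      simp only [if_neg hne, sub_zero, norm_mul, aux_norm_exp]
      obtain ⟨a, ha⟩ := aux_pair_update M ℓ z i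
      rw [ha, ha, ha, ← mul_add, mul_left_comm (_ * _) ‖c n ℓ‖]
      refine mul_le_mul_of_nonneg_left ?_ (norm_nonneg (c n ℓ))
      set P := (pairC M (qc ℓ) z).im with hP
      have i1 : ((n : ℂ) * ((y : ℂ) * Complex.I) + (pairC M (qc ℓ) z + (a : ℂ) * u)).im =
          n * y + P + a * u.im := by simp [hP]; ring
      have i2 : ((n : ℂ) * Complex.I + (pairC M (qc ℓ) z + (a : ℂ) * Complex.I)).im =
          n + P + a := by simp [hP]; ring
      have i3 : ((n : ℂ) * Complex.I + (pairC M (qc ℓ) z + (a : ℂ) * -Complex.I)).im =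
          n + P - a := by simp [hP]; ring
      rw [i1, i2, i3]
      have hui : |u.im| ≤ 1 := (Complex.abs_im_le_norm u).trans hu
      have hn1 : (1 : ℝ) ≤ n := by exact_mod_cast hn
      have hny : (n : ℝ) + y - 1 ≤ n * y := by nlinarith
      have hau : -|a| ≤ a * u.im := by
        have : |a * u.im| ≤ |a| := by
          rw [abs_mul]; exact mul_le_of_le_one_right (abs_nonneg _) hui
        exact (neg_le_neg this).trans (neg_abs_le _)
      have hpi := Real.pi_pos
      rw [mul_add (_ * _) (Real.exp _) (Real.exp _), ← Real.exp_add, ← Real.exp_add, ← Real.exp_add]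
      rcases abs_cases a with ⟨h, -⟩ | ⟨h, -⟩
      · refine le_add_of_nonneg_of_le (Real.exp_pos _).le (Real.exp_le_exp.2 ?_)
        rw [h] at hau
        nlinarith
      · refine le_add_of_le_of_nonneg (Real.exp_le_exp.2 ?_) (Real.exp_pos _).le
        rw [h] at hau
        nlinarith

theorem aux_deriv_bound {l : ℕ} (φ : ℂ → (Fin l → ℂ) → ℂ)
    (hd : DifferentiableOn ℂ (fun p : ℂ × (Fin l → ℂ) => φ p.1 p.2)
      ({τ : ℂ | 0 < τ.im} ×ˢ (Set.univ : Set (Fin l → ℂ))))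
    (τ : ℂ) (hτ : 0 < τ.im) (z : Fin l → ℂ) (i : Fin l) (B : ℝ)
    (hB : ∀ u : ℂ, ‖u‖ ≤ 1 → ‖φ τ (Function.update z i (z i + u)) - 1‖ ≤ B) :
    ‖pderiv' i φ τ z‖ ≤ B := by
  have hdiff : Differentiable ℂ (fun w : ℂ => φ τ (Function.update z i w) - 1) := by
    intro w
    have hU : ({τ : ℂ | 0 < τ.im} ×ˢ (Set.univ : Set (Fin l → ℂ))) ∈
        𝓝 (τ, Function.update z i w) := by
      refine IsOpen.mem_nhds ?_ ⟨hτ, trivial⟩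
      exact (isOpen_lt continuous_const Complex.continuous_im).prod isOpen_univ
    have h1 : DifferentiableAt ℂ (fun p : ℂ × (Fin l → ℂ) => φ p.1 p.2)
        (τ, Function.update z i w) := hd.differentiableAt hU
    have h2 : DifferentiableAt ℂ (fun w : ℂ => (τ, Function.update z i w)) w :=
      (differentiableAt_const _).prodMk (hasDerivAt_update z i w).differentiableAt
    exact (h1.comp w h2).sub_const 1
  have := Complex.norm_deriv_le_of_forall_mem_sphere_norm_le (c := z i) (R := 1) (C := B)
    one_pos hdiff.diffContOnCl (fun w hw => by
      have := hB (w - z i) (by simpa [dist_eq_norm] using (mem_sphere_iff_norm.1 hw).le)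
      simpa using this)
  rw [deriv_sub_const, div_one] at this
  exact this

theorem aux_jac_bound (F : Fin 9 → ℂ → (Fin 8 → ℂ) → ℂ) (m : Fin 9 → ℕ)
    (hd : ∀ j, DifferentiableOn ℂ (fun p : ℂ × (Fin 8 → ℂ) => F j p.1 p.2)
      ({τ : ℂ | 0 < τ.im} ×ˢ (Set.univ : Set (Fin 8 → ℂ))))
    (hc : ∀ j, ∃ c : ℕ → (Fin 8 → ℚ) → ℂ, FourierRep E8Gram (F j) c ∧
      (∀ ℓ : Fin 8 → ℚ, c 0 ℓ = if ℓ = 0 then 1 else 0))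
    (z : Fin 8 → ℂ) : ∃ C : ℝ, ∀ y : ℝ, 1 ≤ y →
      ‖jacJacobian m F ((y : ℂ) * Complex.I) z‖ ≤ C * Real.exp (-(2 * Real.pi * y)) ^ 8 := by
  have hb : ∀ j i, ∃ C : ℝ, 0 ≤ C ∧ ∀ y : ℝ, 1 ≤ y → ∀ u : ℂ, ‖u‖ ≤ 1 →
      ‖F j ((y : ℂ) * Complex.I) (Function.update z i (z i + u)) - 1‖ ≤
        C * Real.exp (-(2 * Real.pi * y)) := fun j i => by
    obtain ⟨c, h1, h2⟩ := hc j
    exact aux_fourier_bound E8Gram (F j) c h1 h2 z i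
  choose C hC0 hC using hb
  obtain ⟨D, hD⟩ : ∃ D : ℝ, ∀ j i, C j i ≤ D := by
    refine ⟨∑ j, ∑ i, C j i, fun j i => ?_⟩
    refine (Finset.single_le_sum (f := fun i => C j i) (fun i _ => hC0 j i)
      (Finset.mem_univ i)).trans ?_
    exact Finset.single_le_sum (f := fun j => ∑ i, C j i)
      (fun j _ => Finset.sum_nonneg fun i _ => hC0 j i) (Finset.mem_univ j)
  obtain ⟨K, hK⟩ : ∃ K : ℝ, ∀ j, (m j : ℝ) ≤ K :=
    ⟨∑ j, (m j : ℝ), fun j => Finset.single_le_sum (f := fun j => (m j : ℝ))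
      (fun j _ => by positivity) (Finset.mem_univ j)⟩
  have hDnn : 0 ≤ D := (hC0 0 0).trans (hD 0 0)
  have hKnn : 0 ≤ K := (Nat.cast_nonneg (m 0)).trans (hK 0)
  set X := K * (1 + D) + D with hX
  refine ⟨(Nat.factorial 9 : ℝ) * X ^ 9, fun y hy => ?_⟩
  have hεp := Real.exp_pos (-(2 * Real.pi * y))
  have hε1 : Real.exp (-(2 * Real.pi * y)) ≤ 1 := by
    rw [Real.exp_le_one_iff]
    have := Real.pi_pos
    nlinarith
  set ε := Real.exp (-(2 * Real.pi * y)) with hε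
  have him : 0 < ((y : ℂ) * Complex.I).im := by simp; linarith
  set τ := (y : ℂ) * Complex.I with hτ
  have hder : ∀ j i, ‖pderiv' i (F j) τ z‖ ≤ D * ε := fun j i =>
    (aux_deriv_bound (F j) (hd j) τ him z i (C j i * ε) (hC j i y hy)).trans
      (mul_le_mul_of_nonneg_right (hD j i) hεp.le)
  have hval : ∀ j, ‖F j τ z‖ ≤ 1 + D := fun j => by
    have h := hC j 0 y hy 0 (by simp)
    rw [add_zero, Function.update_eq_self] at h
    have h2 : ‖F j τ z‖ ≤ ‖F j τ z - 1‖ + ‖(1 : ℂ)‖ := by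
      simpa using norm_add_le (F j τ z - 1) 1
    rw [norm_one] at h2
    have h3 : C j 0 * ε ≤ D := (mul_le_of_le_one_right (hC0 j 0) hε1).trans (hD j 0)
    linarith
  set A : Matrix (Fin 9) (Fin 9) ℂ := Matrix.of fun i j : Fin 9 =>
    Fin.cases ((m j : ℂ) * F j τ z) (fun i' : Fin 8 => pderiv' i' (F j) τ z / (ε : ℂ)) i with hA
  have hεc : (ε : ℂ) ≠ 0 := by exact_mod_cast hεp.ne'
  have hJ : jacJacobian m F τ z = (ε : ℂ) ^ 8 * A.det := by
    have := Matrix.det_mul_column (Fin.cases 1 (fun _ : Fin 8 => (ε : ℂ)) : Fin 9 → ℂ) A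
    rw [Fin.prod_univ_succ] at this
    simp only [Fin.cases_zero, Fin.cases_succ, one_mul, Finset.prod_const, Finset.card_univ,
      Fintype.card_fin] at this
    rw [← this, jacJacobian]
    congr 1
    ext i j
    refine Fin.cases ?_ (fun i' => ?_) i
    · simp [hA]
    · simp only [hA, Matrix.of_apply, Fin.cases_succ]
      field_simp
  have hent : ∀ i j, ‖A i j‖ ≤ X := by
    intro i j
    refine Fin.cases ?_ (fun i' => ?_) i
    · simp only [hA, Matrix.of_apply, Fin.cases_zero, norm_mul, Complex.norm_natCast]
      have := mul_le_mul (hK j) (hval j) (norm_nonneg _) hKnn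
      linarith
    · simp only [hA, Matrix.of_apply, Fin.cases_succ, norm_div, Complex.norm_real,
        Real.norm_eq_abs, abs_of_pos hεp]
      rw [div_le_iff₀ hεp]
      refine (hder j i').trans (mul_le_mul_of_nonneg_right ?_ hεp.le)
      have : 0 ≤ K * (1 + D) := by positivity
      linarith
  have hdet := Matrix.det_le (abv := NormedField.toAbsoluteValue ℂ) (A := A) (x := X) hent
  rw [Fintype.card_fin, nsmul_eq_mul] at hdet
  have hdet' : ‖A.det‖ ≤ (Nat.factorial 9 : ℝ) * X ^ 9 := hdet
  rw [hJ, norm_mul, norm_pow, Complex.norm_real, Real.norm_eq_abs, abs_of_pos hεp, mul_comm]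
  exact mul_le_mul_of_nonneg_right hdet' (by positivity)

theorem aux_coeff (g : ℂ → ℂ) (cf : ℕ → ℂ)
    (hcf : ∀ τ : ℂ, 0 < τ.im →
      HasSum (fun n : ℕ => cf n * Complex.exp (2 * (Real.pi : ℂ) * Complex.I * (n : ℂ) * τ)) (g τ))
    (C : ℝ) (hC : ∀ᶠ y : ℝ in atTop,
      ‖g ((y : ℂ) * Complex.I)‖ ≤ C * Real.exp (-(2 * Real.pi * y)) ^ 8) :
    ∀ n < 8, cf n = 0 := by
  have hT : ∀ y : ℝ, ∀ n : ℕ, Complex.exp (2 * (Real.pi : ℂ) * Complex.I * (n : ℂ) *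
      ((y : ℂ) * Complex.I)) = ((Real.exp (-(2 * Real.pi * y)) : ℝ) : ℂ) ^ n := by
    intro y n
    rw [Complex.ofReal_exp, ← Complex.exp_nat_mul]
    congr 1
    push_cast
    linear_combination (2 * Real.pi * n * y : ℂ) * Complex.I_mul_I
  have hS : ∀ y : ℝ, 0 < y → HasSum (fun n : ℕ => cf n *
      ((Real.exp (-(2 * Real.pi * y)) : ℝ) : ℂ) ^ n) (g ((y : ℂ) * Complex.I)) := by
    intro y hy
    have := hcf ((y : ℂ) * Complex.I) (by simpa using hy)
    simpa only [hT] using this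
  intro n
  induction n using Nat.strong_induction_on with
  | _ n ih =>
  intro hn
  set t : ℝ → ℝ := fun y => Real.exp (-(2 * Real.pi * y)) with ht
  have htp : ∀ y, 0 < t y := fun y => Real.exp_pos _
  have ht0 : Tendsto t atTop (𝓝 0) := aux_exp_tendsto
  -- shifted sums
  have hS2 : ∀ y : ℝ, 0 < y → HasSum (fun m : ℕ => cf (m + n) * (t y : ℂ) ^ m)
      (g ((y : ℂ) * Complex.I) / (t y : ℂ) ^ n) := by
    intro y hy
    have hne : (t y : ℂ) ≠ 0 := by exact_mod_cast (htp y).ne'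
    have h1 := (hasSum_nat_add_iff' n).2 (hS y hy)
    rw [Finset.sum_eq_zero (fun m hm => by
      rw [ih m (Finset.mem_range.1 hm) ((Finset.mem_range.1 hm).trans hn), zero_mul]),
      sub_zero] at h1
    have h2 := h1.div_const ((t y : ℂ) ^ n)
    refine h2.congr_fun ?_
    intro m
    rw [pow_add]
    field_simp
    rfl
  have hlim : Tendsto (fun y : ℝ => ∑' m : ℕ, cf (m + n) * (t y : ℂ) ^ m) atTop
      (𝓝 (∑' m : ℕ, cf (m + n) * (0 : ℂ) ^ m)) := by
    refine tendsto_tsum_of_dominated_convergence (hS2 1 one_pos).summable.norm ?_ ?_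
    · intro m
      have : Tendsto (fun y => (t y : ℂ)) atTop (𝓝 0) := by
        have := (Complex.continuous_ofReal.tendsto 0).comp ht0
        rw [Complex.ofReal_zero] at this
        exact this
      exact (this.pow m).const_mul _
    · filter_upwards [eventually_ge_atTop 1] with y hy m
      simp only [norm_mul, norm_pow, Complex.norm_real, Real.norm_eq_abs, abs_of_pos (htp _)]
      refine mul_le_mul_of_nonneg_left (pow_le_pow_left₀ (htp y).le ?_ m) (norm_nonneg _)
      refine Real.exp_le_exp.2 ?_
      have := Real.pi_pos
      nlinarith
  have hv : (∑' m : ℕ, cf (m + n) * (0 : ℂ) ^ m) = cf n := by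
    rw [tsum_eq_single 0 (fun m hm => by simp [hm])]
    simp
  rw [hv] at hlim
  refine tendsto_nhds_unique hlim ?_
  have hz : Tendsto (fun y => C * t y ^ (8 - n)) atTop (𝓝 0) := by
    have := (ht0.pow (8 - n)).const_mul C
    rwa [zero_pow (by omega), mul_zero] at this
  refine squeeze_zero_norm' ?_ hz
  filter_upwards [hC, eventually_gt_atTop 0] with y hy hy0
  rw [(hS2 y hy0).tsum_eq, norm_div, norm_pow, Complex.norm_real, Real.norm_eq_abs,
    abs_of_pos (htp y), div_le_iff₀ (pow_pos (htp y) n), mul_assoc, ← pow_add,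
    Nat.sub_add_cancel hn.le]
  exact hy

theorem aux_g_bound (F : Fin 9 → ℂ → (Fin 8 → ℂ) → ℂ) (m : Fin 9 → ℕ)
    (hd : ∀ j, DifferentiableOn ℂ (fun p : ℂ × (Fin 8 → ℂ) => F j p.1 p.2)
      ({τ : ℂ | 0 < τ.im} ×ˢ (Set.univ : Set (Fin 8 → ℂ))))
    (hc : ∀ j, ∃ c : ℕ → (Fin 8 → ℚ) → ℂ, FourierRep E8Gram (F j) c ∧
      (∀ ℓ : Fin 8 → ℚ, c 0 ℓ = if ℓ = 0 then 1 else 0))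
    (g : ℂ → ℂ)
    (hgdef : ∀ τ : ℂ, 0 < τ.im → ∀ z : Fin 8 → ℂ,
      jacJacobian m F τ z = g τ * PhiE8 τ z) :
    ∃ C : ℝ, ∀ᶠ y : ℝ in atTop,
      ‖g ((y : ℂ) * Complex.I)‖ ≤ C * Real.exp (-(2 * Real.pi * y)) ^ 8 := by
  obtain ⟨L, hL0, hL⟩ := aux_Phi
  obtain ⟨C, hC⟩ := aux_jac_bound F m hd hc auxZ0
  have hLp : 0 < ‖L‖ := norm_pos_iff.2 hL0
  refine ⟨C / (‖L‖ / 2), ?_⟩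
  have hev := hL.norm.eventually (lt_mem_nhds (half_lt_self hLp))
  filter_upwards [hev, eventually_ge_atTop 1] with y h1 h2
  have h3 := hC y h2
  rw [hgdef _ (by simp; linarith), norm_mul] at h3
  rw [div_mul_eq_mul_div, le_div_iff₀ (by positivity)]
  exact (mul_le_mul_of_nonneg_left h1.le (norm_nonneg _)).trans h3

end PartC

/-- The modular form `g = J(A_1,…,B_6)/Φ_{E_8} ∈ M_172(SL₂(ℤ))` has
Fourier expansion `O(q^8)`, so `g/Δ^8 ∈ M_76(SL₂(ℤ))`; consequently `g = Δ^8·E_4·h` for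
some modular form `h` of weight `72` on `SL₂(ℤ)`, where `Δ = η^24`. -/
theorem E8_g_divisible_by_Delta8_E4
    (F : Fin 9 → ℂ → (Fin 8 → ℂ) → ℂ)
    (hF : ∀ j, IsWeakJacobiForm E8Gram (sakaiWt j) (sakaiIdx j) (F j))
    (hFG : ∀ j, GInvariant weylE8 (F j))
    (hFhol : ∀ j, ∃ c : ℕ → (Fin 8 → ℚ) → ℂ, FourierRep E8Gram (F j) c ∧
      (∀ (n : ℕ) (ℓ : Fin 8 → ℚ), c n ℓ ≠ 0 → pairQ E8Gram ℓ ℓ ≤ 2 * n * sakaiIdx j) ∧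
      (∀ ℓ : Fin 8 → ℚ, c 0 ℓ = if ℓ = 0 then 1 else 0))
    (hFind : AlgIndepOverM F)
    (g : ℂ → ℂ)
    (hgdef : ∀ τ : ℂ, 0 < τ.im → ∀ z : Fin 8 → ℂ,
      jacJacobian sakaiIdx F τ z = g τ * PhiE8 τ z)
    (hg : IsModularForm 172 g) :
    (∃ cf : ℕ → ℂ,
      (∀ τ : ℂ, 0 < τ.im →
        HasSum (fun n : ℕ => cf n * Complex.exp (2 * (Real.pi : ℂ) * Complex.I * (n : ℂ) * τ))
          (g τ)) ∧
      ∀ n < 8, cf n = 0) ∧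
    IsModularForm 76 (fun τ => g τ / dedekindEta τ ^ 192) ∧
    ∃ h : ℂ → ℂ, IsModularForm 72 h ∧
      ∀ τ : ℂ, 0 < τ.im → g τ = dedekindEta τ ^ 192 * E4 τ * h τ := by
  obtain ⟨C, hC⟩ := aux_g_bound F sakaiIdx (fun j => (hF j).1)
    (fun j => by
      obtain ⟨c, h1, -, h3⟩ := hFhol j
      exact ⟨c, h1, h3⟩) g hgdef
  exact aux_final g hg (fun cf hcf => aux_coeff g cf hcf C hC)

end
end
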